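/- The set of natural numbers representable in the form p + 2^(m₁²) + 2^(m₂²), where p is a prime and m₁, m₂ are natural numbers, has positive lower asymptotic density. Equivalently, there exists a constant c > 0 and x₀ such that for all x ≥ x₀, the number V(x) of integers n ≤ x with n = p + 2^(m₁²) + 2^(m₂²) for some prime p and naturals m₁, m₂ satisfies V(x) ≥ c·x. -/

import Mathlib

/-!
Romanoff's method. Let `l = ⌊log₂ x⌋` and `M = ⌊√l⌋`, and let `r(n)` count the representations
`n = p + 2 ^ a² + 2 ^ b²` with a prime `p ≤ x / 2` and `b < M / 2 ≤ a < M`. All these `n` are at most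
`x`, and by Chebyshev's bounds `∑ r(n) ≫ (x / log x) M² ≫ x`. By Cauchy–Schwarz
(`sq_card_le_card_image_mul`) it suffices to show `∑ r(n)² ≪ x` (`exists_second_moment_le`).

The diagonal contributes `≪ M² π(x) ≪ x`. A pair of representations with distinct shifts is a prime
pair with a difference `h ≠ 0` (`gap`), and Selberg's sieve (`card_prime_pairs_le`) bounds their number
by `≪ (x / (log x)²) exp (4 ∑_{p ∣ h, p ≠ 2} 1 / p)`. There are at most `M⁴ ≍ (log x)²` pairs of shifts,
so what is needed is that this exponential is bounded on average over them (`exists_sum_exp_le`).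

Primes `p > M²` are harmless, as `h ≤ 2 ^ M²` has at most `M²` prime factors. For an odd `p ≤ M²`, let `k`
be the order of `2` modulo `p`. If `p ∣ h` then, given three of the four exponents, `2 ^ m²` is fixed
modulo `p` for the remaining one, so `m²` is fixed modulo `k`; the divisor bound shows that this holds for
`≪ M k ^ (-1/4)` values of `m < M` (`card_two_pow_sq_eq_le`). Since the primes with order `k` have
reciprocal sum at most `(2 + log k) / k` (`sum_inv_ordTwo_eq_le`), and those with order at most `k`
contribute at most a factor `≪ k ^ (1/8)` to the exponential (`exists_exp_sum_ordTwo_le`), partial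
summation over `k` bounds the average by the convergent series `∑ k ^ (-17/16)`.
-/

open scoped Classical

namespace Romanoff

open Finset

/-! ### Selberg's quadratic form -/

/-- Selberg's sieve weights. Squarefree numbers are encoded as finite sets of primes: `P` is the
sieving set, `D` the family of sets supporting the weights, `ν p` the density of the excluded
residue classes modulo `p`, and `g = ν / (1 - ν)`. -/
noncomputable def selbergWeight (P : Finset ℕ) (D : Finset (Finset ℕ)) (ν g : ℕ → ℝ)
    (d : Finset ℕ) : ℝ :=
  (-1) ^ d.card * (∏ p ∈ d, (ν p)⁻¹) *
    ((∑ m ∈ P.powerset.filter (fun m => m ∈ D ∧ d ⊆ m), ∏ p ∈ m, g p) /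
      ∑ m ∈ P.powerset.filter (fun m => m ∈ D), ∏ p ∈ m, g p)

theorem selbergWeight_empty (P : Finset ℕ) (D : Finset (Finset ℕ)) (ν g : ℕ → ℝ)
    (hL : (∑ m ∈ P.powerset.filter (fun m => m ∈ D), ∏ p ∈ m, g p) ≠ 0) :
    selbergWeight P D ν g ∅ = 1 := by
  simp [selbergWeight, hL]

/-- The weights are supported on the downward closed family `D`. -/
theorem selbergWeight_eq_zero (P : Finset ℕ) (D : Finset (Finset ℕ)) (ν g : ℕ → ℝ)
    (hD : ∀ m ∈ D, ∀ d ⊆ m, d ∈ D) {d : Finset ℕ} (hd : d ∉ D) :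
    selbergWeight P D ν g d = 0 := by
  have : P.powerset.filter (fun m => m ∈ D ∧ d ⊆ m) = ∅ := by
    apply Finset.filter_eq_empty_iff.2
    rintro m - ⟨h1, h2⟩
    exact hd (hD m h1 d h2)
  simp [selbergWeight, this]

theorem abs_selbergWeight_le (P : Finset ℕ) (D : Finset (Finset ℕ)) (ν g : ℕ → ℝ)
    (hg : ∀ p ∈ P, 0 < g p) (hν : ∀ p ∈ P, 0 < ν p) {d : Finset ℕ} (hd : d ⊆ P) :
    |selbergWeight P D ν g d| ≤ ∏ p ∈ d, (ν p)⁻¹ := by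
  have hν' : 0 ≤ ∏ p ∈ d, (ν p)⁻¹ :=
    Finset.prod_nonneg fun p hp => (inv_pos.2 (hν p (hd hp))).le
  have hm : ∀ m ∈ P.powerset, 0 ≤ ∏ p ∈ m, g p := fun m hm =>
    Finset.prod_nonneg fun p hp => (hg p (Finset.mem_powerset.1 hm hp)).le
  have h1 : 0 ≤ ∑ m ∈ P.powerset.filter (fun m => m ∈ D ∧ d ⊆ m), ∏ p ∈ m, g p :=
    Finset.sum_nonneg fun m hm' => hm m (Finset.mem_filter.1 hm').1
  have h2 : ∑ m ∈ P.powerset.filter (fun m => m ∈ D ∧ d ⊆ m), ∏ p ∈ m, g p ≤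
      ∑ m ∈ P.powerset.filter (fun m => m ∈ D), ∏ p ∈ m, g p := by
    apply Finset.sum_le_sum_of_subset_of_nonneg
    · intro m
      simp only [Finset.mem_filter]
      tauto
    · intro m hm' _
      exact hm m (Finset.mem_filter.1 hm').1
  rw [selbergWeight, abs_mul, abs_mul, abs_pow, abs_neg, abs_one, one_pow, one_mul,
    abs_of_nonneg hν', abs_of_nonneg (div_nonneg h1 (h1.trans h2))]
  exact mul_le_of_le_one_right hν' (div_le_one_of_le₀ h2 (h1.trans h2))

/-- Möbius inversion on the Boolean lattice. -/
theorem sum_interval_neg_one_pow (m n : Finset ℕ) (h : m ⊆ n) :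
    ∑ d ∈ n.powerset.filter (fun d => m ⊆ d), (-1 : ℝ) ^ d.card =
      if m = n then (-1) ^ m.card else 0 := by
  have e : ∑ d ∈ n.powerset.filter (fun d => m ⊆ d), (-1 : ℝ) ^ d.card =
      ∑ e ∈ (n \ m).powerset, (-1 : ℝ) ^ m.card * (-1) ^ e.card := by
    symm
    apply Finset.sum_bij' (fun e _ => m ∪ e) (fun d _ => d \ m)
    · intro e he
      rw [Finset.mem_powerset] at he
      simp only [Finset.mem_filter, Finset.mem_powerset]
      exact ⟨Finset.union_subset h (he.trans Finset.sdiff_subset), Finset.subset_union_left⟩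
    · intro d hd
      simp only [Finset.mem_filter, Finset.mem_powerset] at hd ⊢
      exact Finset.sdiff_subset_sdiff hd.1 le_rfl
    · intro e he
      rw [Finset.mem_powerset] at he
      ext x
      have := @he x
      simp only [Finset.mem_sdiff, Finset.mem_union] at this ⊢
      tauto
    · intro d hd
      simp only [Finset.mem_filter, Finset.mem_powerset] at hd
      exact Finset.union_sdiff_of_subset hd.2
    · intro e he
      rw [Finset.mem_powerset] at he
      rw [Finset.card_union_of_disjoint, pow_add]
      exact Finset.disjoint_of_subset_right he Finset.disjoint_sdiff
  rw [e, ← Finset.mul_sum]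
  have h2 := congrArg (Int.cast : ℤ → ℝ) (Finset.sum_powerset_neg_one_pow_card (x := n \ m))
  push_cast at h2
  rw [h2]
  by_cases hmn : m = n
  · subst hmn
    simp
  · have : n \ m ≠ ∅ := by
      rw [Ne, Finset.sdiff_eq_empty_iff_subset]
      exact fun h' => hmn (h.antisymm h')
    simp [this, hmn]

/-- The quadratic form in Selberg's sieve takes its minimum value `1 / L` at Selberg's weights. -/
theorem selberg_quadratic_form (P : Finset ℕ) (D : Finset (Finset ℕ)) (ν g : ℕ → ℝ)
    (hg : ∀ p ∈ P, 0 < g p) (hν : ∀ p ∈ P, 0 < ν p)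
    (hνg : ∀ p ∈ P, (ν p)⁻¹ = 1 + (g p)⁻¹)
    (hL : (∑ m ∈ P.powerset.filter (fun m => m ∈ D), ∏ p ∈ m, g p) ≠ 0) :
    ∑ d₁ ∈ P.powerset, ∑ d₂ ∈ P.powerset,
      selbergWeight P D ν g d₁ * selbergWeight P D ν g d₂ * ∏ p ∈ d₁ ∪ d₂, ν p =
      (∑ m ∈ P.powerset.filter (fun m => m ∈ D), ∏ p ∈ m, g p)⁻¹ := by
  set L := ∑ m ∈ P.powerset.filter (fun m => m ∈ D), ∏ p ∈ m, g p with hLdef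
  set a : Finset ℕ → ℝ := fun d => selbergWeight P D ν g d * ∏ p ∈ d, ν p with ha
  have hνprod : ∀ d ⊆ P, (∏ p ∈ d, (ν p)⁻¹) * ∏ p ∈ d, ν p = 1 := by
    intro d hd
    rw [← Finset.prod_mul_distrib]
    exact Finset.prod_eq_one fun p hp => inv_mul_cancel₀ (hν p (hd hp)).ne'
  have ha' : ∀ d ∈ P.powerset, a d = ∑ m ∈ P.powerset,
      if m ∈ D ∧ d ⊆ m then (-1) ^ d.card * (∏ p ∈ m, g p) / L else 0 := by
    intro d hd
    rw [← Finset.sum_filter, ← Finset.sum_div, ← Finset.mul_sum]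
    simp only [ha, selbergWeight, ← hLdef]
    have := hνprod d (Finset.mem_powerset.1 hd)
    linear_combination ((-1) ^ d.card * (∑ m ∈ P.powerset.filter (fun m => m ∈ D ∧ d ⊆ m), ∏ p ∈ m, g p) / L) * this
  have hy : ∀ m ∈ P.powerset, ∑ d ∈ P.powerset.filter (fun d => m ⊆ d), a d =
      if m ∈ D then (-1) ^ m.card * (∏ p ∈ m, g p) / L else 0 := by
    intro m hm
    have hmP := Finset.mem_powerset.1 hm
    rw [Finset.sum_congr rfl fun d hd => ha' d (Finset.mem_filter.1 hd).1, Finset.sum_comm]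
    have : ∀ n ∈ P.powerset, (∑ d ∈ P.powerset.filter (fun d => m ⊆ d),
        if n ∈ D ∧ d ⊆ n then (-1) ^ d.card * (∏ p ∈ n, g p) / L else 0) =
        if n = m then (if m ∈ D then (-1) ^ m.card * (∏ p ∈ m, g p) / L else 0) else 0 := by
      intro n hn
      have hnP := Finset.mem_powerset.1 hn
      by_cases hnD : n ∈ D
      · by_cases hmn : m ⊆ n
        · have h3 := sum_interval_neg_one_pow m n hmn
          have h4 : ∑ d ∈ P.powerset.filter (fun d => m ⊆ d),
              (if n ∈ D ∧ d ⊆ n then (-1) ^ d.card * (∏ p ∈ n, g p) / L else 0) =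
              (∑ d ∈ n.powerset.filter (fun d => m ⊆ d), (-1 : ℝ) ^ d.card) *
                ((∏ p ∈ n, g p) / L) := by
            rw [Finset.sum_mul, ← Finset.sum_filter]
            apply Finset.sum_congr
            · ext d
              simp only [Finset.mem_filter, Finset.mem_powerset]
              constructor
              · tauto
              · rintro ⟨h5, h6⟩
                exact ⟨⟨h5.trans hnP, h6⟩, hnD, h5⟩
            · intro d _
              ring
          rw [h4, h3]
          by_cases h7 : m = n
          · subst h7
            simp [hnD]
            ring
          · simp [h7, Ne.symm h7]
        · rw [Finset.sum_eq_zero, if_neg]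
          · rintro rfl
            exact hmn le_rfl
          · intro d hd
            rw [if_neg]
            rintro ⟨-, h5⟩
            exact hmn ((Finset.mem_filter.1 hd).2.trans h5)
      · rw [Finset.sum_eq_zero]
        · by_cases h : n = m
          · subst h
            simp [hnD]
          · simp [h]
        · intro d _
          simp [hnD]
    rw [Finset.sum_congr rfl this, Finset.sum_ite_eq' P.powerset m]
    simp [hmP]
  have hexp : ∀ d₁ ∈ P.powerset, ∀ d₂ ∈ P.powerset,
      selbergWeight P D ν g d₁ * selbergWeight P D ν g d₂ * ∏ p ∈ d₁ ∪ d₂, ν p =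
      ∑ m ∈ P.powerset, (∏ p ∈ m, (g p)⁻¹) *
        ((if m ⊆ d₁ then a d₁ else 0) * (if m ⊆ d₂ then a d₂ else 0)) := by
    intro d₁ h₁ d₂ h₂
    rw [Finset.mem_powerset] at h₁ h₂
    have h3 : ∏ p ∈ d₁ ∩ d₂, (ν p)⁻¹ = ∑ m ∈ (d₁ ∩ d₂).powerset, ∏ p ∈ m, (g p)⁻¹ := by
      rw [← Finset.prod_one_add]
      exact Finset.prod_congr rfl fun p hp => hνg p (h₁ (Finset.mem_inter.1 hp).1)
    have h4 : ∏ p ∈ d₁ ∪ d₂, ν p = (∏ p ∈ d₁, ν p) * (∏ p ∈ d₂, ν p) *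
        ∏ p ∈ d₁ ∩ d₂, (ν p)⁻¹ := by
      have h5 := hνprod (d₁ ∩ d₂) (Finset.inter_subset_left.trans h₁)
      rw [← Finset.prod_union_inter]
      linear_combination (-(∏ p ∈ d₁ ∪ d₂, ν p)) * h5
    rw [h4, h3]
    have h6 : ∑ m ∈ P.powerset, (∏ p ∈ m, (g p)⁻¹) *
        ((if m ⊆ d₁ then a d₁ else 0) * (if m ⊆ d₂ then a d₂ else 0)) =
        (∑ m ∈ (d₁ ∩ d₂).powerset, ∏ p ∈ m, (g p)⁻¹) * (a d₁ * a d₂) := by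
      rw [Finset.sum_mul]
      symm
      apply Finset.sum_subset_zero_on_sdiff
      · exact Finset.powerset_mono.2 (Finset.inter_subset_left.trans h₁)
      · intro m hm
        simp only [Finset.mem_sdiff, Finset.mem_powerset, Finset.subset_inter_iff] at hm
        by_cases h7 : m ⊆ d₁ <;> by_cases h8 : m ⊆ d₂ <;> simp_all
      · intro m hm
        simp only [Finset.mem_powerset, Finset.subset_inter_iff] at hm
        simp [hm.1, hm.2]
    rw [h6]
    simp only [ha]
    ring
  rw [Finset.sum_congr rfl fun d₁ h₁ => Finset.sum_congr rfl fun d₂ h₂ => hexp d₁ h₁ d₂ h₂]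
  have hswap : ∑ d₁ ∈ P.powerset, ∑ d₂ ∈ P.powerset, ∑ m ∈ P.powerset, (∏ p ∈ m, (g p)⁻¹) *
        ((if m ⊆ d₁ then a d₁ else 0) * (if m ⊆ d₂ then a d₂ else 0)) =
      ∑ m ∈ P.powerset, (∏ p ∈ m, (g p)⁻¹) *
        (∑ d ∈ P.powerset.filter (fun d => m ⊆ d), a d) ^ 2 := by
    have : ∀ m ∈ P.powerset, (∏ p ∈ m, (g p)⁻¹) *
        (∑ d ∈ P.powerset.filter (fun d => m ⊆ d), a d) ^ 2 =
        ∑ d₁ ∈ P.powerset, ∑ d₂ ∈ P.powerset, (∏ p ∈ m, (g p)⁻¹) *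
        ((if m ⊆ d₁ then a d₁ else 0) * (if m ⊆ d₂ then a d₂ else 0)) := by
      intro m _
      rw [Finset.sum_filter, sq, Finset.sum_mul_sum, Finset.mul_sum]
      exact Finset.sum_congr rfl fun _ _ => Finset.mul_sum _ _ _
    rw [Finset.sum_congr rfl this, Finset.sum_comm]
    rw [Finset.sum_comm]
    conv_rhs => rw [Finset.sum_comm]
    exact Finset.sum_congr rfl fun _ _ => Finset.sum_comm
  rw [hswap]
  have hfin : ∀ m ∈ P.powerset, (∏ p ∈ m, (g p)⁻¹) *
        (∑ d ∈ P.powerset.filter (fun d => m ⊆ d), a d) ^ 2 =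
        if m ∈ D then (∏ p ∈ m, g p) / L ^ 2 else 0 := by
    intro m hm
    rw [hy m hm]
    by_cases hmD : m ∈ D
    · simp only [hmD, if_true]
      have h9 : (∏ p ∈ m, (g p)⁻¹) * ∏ p ∈ m, g p = 1 := by
        rw [← Finset.prod_mul_distrib]
        exact Finset.prod_eq_one fun p hp =>
          inv_mul_cancel₀ (hg p (Finset.mem_powerset.1 hm hp)).ne'
      have h10 : ((-1 : ℝ) ^ m.card) ^ 2 = 1 := by
        rw [← pow_mul, mul_comm, pow_mul]; simp
      rw [div_pow, mul_pow, h10, one_mul, sq (∏ p ∈ m, g p), ← mul_div_assoc, ← mul_assoc, h9,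
        one_mul]
    · simp [hmD]
  rw [Finset.sum_congr rfl hfin, ← Finset.sum_filter, ← Finset.sum_div, ← hLdef]
  field_simp

/-! ### Selberg's upper bound for `n (n + h)` -/

theorem abs_card_modEq_sub_le (N r v : ℕ) (hr : 0 < r) :
    |(((range N).filter (fun n => n ≡ v [MOD r])).card : ℝ) - N / r| ≤ 1 := by
  have h := Nat.count_modEq_card (b := N) hr v
  rw [Nat.count_eq_card_filter_range] at h
  have hN := Nat.div_add_mod N r
  have hlt := Nat.mod_lt N hr
  have hr' : (0 : ℝ) < r := by exact_mod_cast hr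
  have h1 : (N : ℝ) = r * ((N / r : ℕ) : ℝ) + ((N % r : ℕ) : ℝ) := by exact_mod_cast hN.symm
  have h2 : (N : ℝ) / r = ((N / r : ℕ) : ℝ) + ((N % r : ℕ) : ℝ) / r := by
    rw [h1]
    field_simp
  have h3 : ((N % r : ℕ) : ℝ) / r ≤ 1 := by
    rw [div_le_one hr']; exact_mod_cast hlt.le
  have h4 : 0 ≤ ((N % r : ℕ) : ℝ) / r := by positivity
  rw [h2, abs_le, h]
  by_cases hc : v % r < N % r
  · simp only [hc, if_true]; push_cast; constructor <;> linarith
  · simp only [hc, if_false]; push_cast; constructor <;> linarith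

theorem prod_primes_dvd_iff (T : Finset ℕ) (hT : ∀ p ∈ T, p.Prime) (n : ℕ) :
    ∏ p ∈ T, p ∣ n ↔ ∀ p ∈ T, p ∣ n := by
  constructor
  · intro h p hp
    exact (Finset.dvd_prod_of_mem _ hp).trans h
  · intro h
    exact Finset.prod_primes_dvd n (fun p hp => (hT p hp).prime) h

/-- By the Chinese remainder theorem `n (n + h)` is divisible by all the primes in `T` for `2 ^ #T`
residue classes modulo their product. -/
theorem abs_card_dvd_sub_le (N h : ℕ) (T : Finset ℕ) (hT : ∀ p ∈ T, p.Prime)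
    (hh : ∀ p ∈ T, ¬ p ∣ h) :
    |(((range N).filter (fun n => ∀ p ∈ T, p ∣ n * (n + h))).card : ℝ) - N * ∏ p ∈ T, (2 / p : ℝ)|
      ≤ 2 ^ T.card := by
  have hr : 0 < ∏ p ∈ T, p := Finset.prod_pos fun p hp => (hT p hp).pos
  have hfib : ((range N).filter (fun n => ∀ p ∈ T, p ∣ n * (n + h))).card =
      ∑ U ∈ T.powerset, (((range N).filter (fun n => ∀ p ∈ T, p ∣ n * (n + h))).filter
        (fun n => T.filter (fun p => p ∣ n) = U)).card := by
    apply Finset.card_eq_sum_card_fiberwise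
    intro n _
    simp only [Finset.coe_powerset, Set.mem_preimage, Set.mem_powerset_iff, Finset.coe_subset]
    exact Finset.filter_subset _ _
  have hone : ∀ U ∈ T.powerset, |((((range N).filter (fun n => ∀ p ∈ T, p ∣ n * (n + h))).filter
        (fun n => T.filter (fun p => p ∣ n) = U)).card : ℝ) - N / ((∏ p ∈ T, p : ℕ) : ℝ)| ≤ 1 := by
    intro U hU
    rw [Finset.mem_powerset] at hU
    have hcop : Nat.Coprime (∏ p ∈ U, p) (∏ p ∈ T \ U, p) := by
      apply Nat.Coprime.prod_left
      intro p hp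
      apply Nat.Coprime.prod_right
      intro q hq
      rw [Finset.mem_sdiff] at hq
      refine (Nat.coprime_primes (hT p (hU hp)) (hT q hq.1)).2 ?_
      rintro rfl
      exact hq.2 hp
    have hmul : (∏ p ∈ U, p) * (∏ p ∈ T \ U, p) = ∏ p ∈ T, p := by
      rw [mul_comm, Finset.prod_sdiff hU]
    have hr2 : 0 < ∏ p ∈ T \ U, p :=
      Finset.prod_pos fun p hp => (hT p (Finset.mem_sdiff.1 hp).1).pos
    -- a residue that is `-h` modulo the product over `T \ U`
    obtain ⟨v, hv1, hv2⟩ := Nat.chineseRemainder hcop 0 ((∏ p ∈ T \ U, p) * h - h)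
    have hv2' : ∏ p ∈ T \ U, p ∣ v + h := by
      have h1 : v + h ≡ (∏ p ∈ T \ U, p) * h - h + h [MOD ∏ p ∈ T \ U, p] := hv2.add_right h
      rw [Nat.sub_add_cancel (Nat.le_mul_of_pos_left h hr2)] at h1
      exact (h1.dvd_iff dvd_rfl).2 (dvd_mul_right _ _)
    have hv1' : ∏ p ∈ U, p ∣ v := (hv1.dvd_iff dvd_rfl).2 (dvd_zero _)
    have heq : ((range N).filter (fun n => ∀ p ∈ T, p ∣ n * (n + h))).filter
        (fun n => T.filter (fun p => p ∣ n) = U) =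
        (range N).filter (fun n => n ≡ v [MOD ∏ p ∈ T, p]) := by
      rw [Finset.filter_filter]
      apply Finset.filter_congr
      intro n _
      rw [← hmul, ← Nat.modEq_and_modEq_iff_modEq_mul hcop]
      have e1 : n ≡ v [MOD ∏ p ∈ U, p] ↔ ∀ p ∈ U, p ∣ n := by
        rw [← prod_primes_dvd_iff U fun p hp => hT p (hU hp)]
        constructor
        · intro h1
          exact (h1.dvd_iff dvd_rfl).2 hv1'
        · intro h1
          exact ((Nat.modEq_zero_iff_dvd).2 h1).trans ((Nat.modEq_zero_iff_dvd).2 hv1').symm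
      have e2 : n ≡ v [MOD ∏ p ∈ T \ U, p] ↔ ∀ p ∈ T \ U, p ∣ n + h := by
        rw [← prod_primes_dvd_iff (T \ U) fun p hp => hT p (Finset.mem_sdiff.1 hp).1]
        constructor
        · intro h1
          exact ((h1.add_right h).dvd_iff dvd_rfl).2 hv2'
        · intro h1
          exact Nat.ModEq.add_right_cancel' h
            (((Nat.modEq_zero_iff_dvd).2 h1).trans ((Nat.modEq_zero_iff_dvd).2 hv2').symm)
      rw [e1, e2]
      constructor
      · rintro ⟨h1, h2⟩
        subst h2
        constructor
        · intro p hp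
          exact (Finset.mem_filter.1 hp).2
        · intro p hp
          simp only [Finset.mem_sdiff, Finset.mem_filter, not_and] at hp
          exact ((hT p hp.1).dvd_mul.1 (h1 p hp.1)).resolve_left (hp.2 hp.1)
      · rintro ⟨h1, h2⟩
        constructor
        · intro p hp
          by_cases hpU : p ∈ U
          · exact (h1 p hpU).mul_right _
          · exact (h2 p (Finset.mem_sdiff.2 ⟨hp, hpU⟩)).mul_left _
        · ext p
          rw [Finset.mem_filter]
          constructor
          · rintro ⟨hp, hpn⟩
            by_contra hpU
            exact hh p hp ((Nat.dvd_add_right hpn).1 (h2 p (Finset.mem_sdiff.2 ⟨hp, hpU⟩)))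
          · intro hp
            exact ⟨hU hp, h1 p hp⟩
    rw [heq]
    exact abs_card_modEq_sub_le N _ v hr
  have hmain : (N : ℝ) * ∏ p ∈ T, (2 / p : ℝ) =
      ∑ U ∈ T.powerset, (N : ℝ) / ((∏ p ∈ T, p : ℕ) : ℝ) := by
    rw [Finset.sum_const, Finset.card_powerset, Finset.prod_div_distrib, Finset.prod_const,
      nsmul_eq_mul]
    push_cast
    ring
  rw [hfib, hmain, Nat.cast_sum]
  rw [← Finset.sum_sub_distrib]
  refine (Finset.abs_sum_le_sum_abs _ _).trans ?_
  refine (Finset.sum_le_sum hone).trans ?_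
  simp [Finset.card_powerset]

/-- Selberg's upper bound for the number of `n < N` such that `n (n + h)` has no prime factor
in `P`; the weights are supported on the sets of primes with product at most `z`. -/
theorem selberg_bound (N h z : ℕ) (hz : 1 ≤ z) (P : Finset ℕ) (hP : ∀ p ∈ P, p.Prime)
    (hP2 : ∀ p ∈ P, 3 ≤ p) (hh : ∀ p ∈ P, ¬ p ∣ h) :
    (((range N).filter (fun n => ∀ p ∈ P, ¬ p ∣ n * (n + h))).card : ℝ) ≤
      N / (∑ m ∈ P.powerset.filter (fun m => ∏ p ∈ m, p ≤ z), ∏ p ∈ m, (2 / (p - 2) : ℝ)) +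
        (z : ℝ) ^ 4 := by
  set D : Finset (Finset ℕ) := P.powerset.filter (fun m => ∏ p ∈ m, p ≤ z) with hD
  set ν : ℕ → ℝ := fun p => 2 / p with hν
  set g : ℕ → ℝ := fun p => 2 / (p - 2) with hg
  have hfD : P.powerset.filter (fun m => m ∈ D) = D := by
    rw [hD]
    ext m
    simp
  have hp3 : ∀ p ∈ P, (3 : ℝ) ≤ p := fun p hp => by exact_mod_cast hP2 p hp
  have hg0 : ∀ p ∈ P, 0 < g p := fun p hp => by
    have := hp3 p hp
    exact div_pos two_pos (by linarith)
  have hν0 : ∀ p ∈ P, 0 < ν p := fun p hp => by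
    have := hp3 p hp
    exact div_pos two_pos (by linarith)
  have hνg : ∀ p ∈ P, (ν p)⁻¹ = 1 + (g p)⁻¹ := fun p hp => by
    simp only [hν, hg, inv_div]
    ring
  have hDdown : ∀ m ∈ D, ∀ d ⊆ m, d ∈ D := by
    intro m hm d hd
    simp only [hD, Finset.mem_filter, Finset.mem_powerset] at hm ⊢
    refine ⟨hd.trans hm.1, le_trans ?_ hm.2⟩
    exact Finset.prod_le_prod_of_subset_of_one_le' hd fun p hp _ => (hP p (hm.1 hp)).one_lt.le
  have hemp : ∅ ∈ D := by simp [hD, hz]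
  have hL : 0 < ∑ m ∈ D, ∏ p ∈ m, g p := by
    apply Finset.sum_pos
    · intro m hm
      apply Finset.prod_pos
      intro p hp
      exact hg0 p (Finset.mem_powerset.1 (Finset.mem_filter.1 hm).1 hp)
    · exact ⟨∅, hemp⟩
  set w : Finset ℕ → ℝ := selbergWeight P D ν g with hw
  have hw1 : w ∅ = 1 := selbergWeight_empty P D ν g (by rw [hfD]; exact hL.ne')
  have hquad := selberg_quadratic_form P D ν g hg0 hν0 hνg (by rw [hfD]; exact hL.ne')
  rw [hfD] at hquad
  have hwb : ∀ d ∈ P.powerset, |w d| * 2 ^ d.card ≤ if d ∈ D then (z : ℝ) else 0 := by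
    intro d hd
    by_cases hdD : d ∈ D
    · rw [if_pos hdD]
      have h1 := abs_selbergWeight_le P D ν g hg0 hν0 (Finset.mem_powerset.1 hd)
      have h2 : (∏ p ∈ d, (ν p)⁻¹) * 2 ^ d.card = ((∏ p ∈ d, p : ℕ) : ℝ) := by
        rw [← Finset.prod_const, ← Finset.prod_mul_distrib, Nat.cast_prod]
        apply Finset.prod_congr rfl
        intro p _
        simp only [hν, inv_div]
        ring
      calc |w d| * 2 ^ d.card ≤ (∏ p ∈ d, (ν p)⁻¹) * 2 ^ d.card := by gcongr
        _ ≤ z := by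
          rw [h2]
          exact_mod_cast (Finset.mem_filter.1 hdD).2
    · rw [if_neg hdD, hw, selbergWeight_eq_zero P D ν g hDdown hdD]
      simp
  have hDcard : (D.card : ℝ) ≤ z := by
    have : D.card ≤ (Finset.Icc 1 z).card := by
      apply Finset.card_le_card_of_injOn (fun m => ∏ p ∈ m, p)
      · intro m hm
        have hm' := Finset.mem_filter.1 hm
        simp only [Finset.coe_Icc, Set.mem_Icc]
        exact ⟨Finset.prod_pos fun p hp => (hP p (Finset.mem_powerset.1 hm'.1 hp)).pos, hm'.2⟩
      · intro m hm n hn hmn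
        have hm' := Finset.mem_powerset.1 (Finset.mem_filter.1 hm).1
        have hn' := Finset.mem_powerset.1 (Finset.mem_filter.1 hn).1
        have e1 := Nat.primeFactors_prod fun p hp => hP p (hm' hp)
        have e2 := Nat.primeFactors_prod fun p hp => hP p (hn' hp)
        simp only at hmn
        rw [← e1, ← e2, hmn]
    rw [Nat.card_Icc] at this
    exact_mod_cast this
  have hS : ∑ d ∈ P.powerset, |w d| * 2 ^ d.card ≤ (z : ℝ) ^ 2 := by
    calc ∑ d ∈ P.powerset, |w d| * 2 ^ d.card
        ≤ ∑ d ∈ P.powerset, if d ∈ D then (z : ℝ) else 0 := Finset.sum_le_sum hwb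
      _ = D.card * z := by
        rw [← Finset.sum_filter, hfD, Finset.sum_const, nsmul_eq_mul]
      _ ≤ z * z := by gcongr
      _ = (z : ℝ) ^ 2 := by ring
  -- the sifted count is at most the count weighted by the square of the sum of the weights
  have h1 : (((range N).filter (fun n => ∀ p ∈ P, ¬ p ∣ n * (n + h))).card : ℝ) ≤
      ∑ n ∈ range N, (∑ d ∈ P.powerset, if ∀ p ∈ d, p ∣ n * (n + h) then w d else 0) ^ 2 := by
    rw [Finset.card_filter]
    push_cast
    apply Finset.sum_le_sum
    intro n _
    by_cases hn : ∀ p ∈ P, ¬ p ∣ n * (n + h)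
    · rw [if_pos hn]
      have : ∑ d ∈ P.powerset, (if ∀ p ∈ d, p ∣ n * (n + h) then w d else 0) = 1 := by
        rw [Finset.sum_eq_single ∅]
        · simp [hw1]
        · intro d hd hd0
          rw [if_neg]
          intro hall
          obtain ⟨p, hp⟩ := Finset.nonempty_iff_ne_empty.2 hd0
          exact hn p (Finset.mem_powerset.1 hd hp) (hall p hp)
        · simp
      rw [this, one_pow]
    · rw [if_neg hn]
      positivity
  have h2 : ∑ n ∈ range N, (∑ d ∈ P.powerset, if ∀ p ∈ d, p ∣ n * (n + h) then w d else 0) ^ 2 =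
      ∑ d₁ ∈ P.powerset, ∑ d₂ ∈ P.powerset, w d₁ * w d₂ *
        ((range N).filter (fun n => ∀ p ∈ d₁ ∪ d₂, p ∣ n * (n + h))).card := by
    simp_rw [sq, Finset.sum_mul_sum]
    rw [Finset.sum_comm]
    refine Finset.sum_congr rfl fun d₁ _ => ?_
    rw [Finset.sum_comm]
    refine Finset.sum_congr rfl fun d₂ _ => ?_
    rw [Finset.card_filter]
    push_cast
    rw [Finset.mul_sum]
    refine Finset.sum_congr rfl fun n _ => ?_
    have : (∀ p ∈ d₁ ∪ d₂, p ∣ n * (n + h)) ↔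
        (∀ p ∈ d₁, p ∣ n * (n + h)) ∧ (∀ p ∈ d₂, p ∣ n * (n + h)) := by
      simp only [Finset.mem_union]
      constructor
      · intro H
        exact ⟨fun p hp => H p (Or.inl hp), fun p hp => H p (Or.inr hp)⟩
      · rintro ⟨H1, H2⟩ p (hp | hp)
        exacts [H1 p hp, H2 p hp]
    by_cases c1 : ∀ p ∈ d₁, p ∣ n * (n + h) <;> by_cases c2 : ∀ p ∈ d₂, p ∣ n * (n + h)
    · rw [if_pos c1, if_pos c2, if_pos (this.2 ⟨c1, c2⟩), mul_one]
    · rw [if_neg c2, if_neg (fun H => c2 (this.1 H).2)]; ring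
    · rw [if_neg c1, if_neg (fun H => c1 (this.1 H).1)]; ring
    · rw [if_neg c1, if_neg (fun H => c1 (this.1 H).1)]; ring
  have h3 : ∀ d₁ ∈ P.powerset, ∀ d₂ ∈ P.powerset, w d₁ * w d₂ *
        ((range N).filter (fun n => ∀ p ∈ d₁ ∪ d₂, p ∣ n * (n + h))).card ≤
        N * (w d₁ * w d₂ * ∏ p ∈ d₁ ∪ d₂, ν p) + (|w d₁| * 2 ^ d₁.card) * (|w d₂| * 2 ^ d₂.card) := by
    intro d₁ hd₁ d₂ hd₂
    have hsub : d₁ ∪ d₂ ⊆ P :=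
      Finset.union_subset (Finset.mem_powerset.1 hd₁) (Finset.mem_powerset.1 hd₂)
    have h4 := abs_card_dvd_sub_le N h (d₁ ∪ d₂) (fun p hp => hP p (hsub hp))
      (fun p hp => hh p (hsub hp))
    set cc : ℝ := (((range N).filter (fun n => ∀ p ∈ d₁ ∪ d₂, p ∣ n * (n + h))).card : ℝ)
    have h5 : w d₁ * w d₂ * (cc - N * ∏ p ∈ d₁ ∪ d₂, ν p) ≤
        |w d₁| * |w d₂| * 2 ^ (d₁ ∪ d₂).card := by
      refine (le_abs_self _).trans ?_
      rw [abs_mul, abs_mul]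
      gcongr
    have h6 : (2 : ℝ) ^ (d₁ ∪ d₂).card ≤ 2 ^ d₁.card * 2 ^ d₂.card := by
      rw [← pow_add]
      exact pow_le_pow_right₀ (by norm_num) (Finset.card_union_le _ _)
    have h7 : |w d₁| * |w d₂| * 2 ^ (d₁ ∪ d₂).card ≤
        |w d₁| * |w d₂| * (2 ^ d₁.card * 2 ^ d₂.card) := by gcongr
    nlinarith [h5, h7]
  rw [h2] at h1
  refine h1.trans ?_
  refine (Finset.sum_le_sum fun d₁ h₁ => Finset.sum_le_sum fun d₂ h₂ => h3 d₁ h₁ d₂ h₂).trans ?_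
  simp_rw [Finset.sum_add_distrib, ← Finset.mul_sum, ← Finset.sum_mul]
  rw [hquad, ← div_eq_mul_inv]
  have hS0 : 0 ≤ ∑ d ∈ P.powerset, |w d| * 2 ^ d.card := Finset.sum_nonneg fun _ _ => by positivity
  have : (∑ d ∈ P.powerset, |w d| * 2 ^ d.card) * (∑ d ∈ P.powerset, |w d| * 2 ^ d.card) ≤
      (z : ℝ) ^ 4 := by
    calc _ ≤ (z : ℝ) ^ 2 * (z : ℝ) ^ 2 := by gcongr
      _ = (z : ℝ) ^ 4 := by ring
  linarith

/-! ### Prime pairs with a given difference -/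

/-- Integers with exactly the prime factors `d` are multiples of `∏ d` by `d`-smooth integers, so
the Euler product bounds their reciprocal sum. -/
theorem sum_inv_primeFactors_eq_le (S : Finset ℕ) (d : Finset ℕ) (hd : ∀ p ∈ d, p.Prime)
    (hS : ∀ n ∈ S, n ≠ 0 ∧ n.primeFactors = d) :
    ∑ n ∈ S, (1 / n : ℝ) ≤ ∏ p ∈ d, (1 / (p - 1) : ℝ) := by
  let f : ℕ →* ℝ :=
    { toFun := fun n => (n : ℝ)⁻¹
      map_one' := by simp
      map_mul' := by intro a b; simp [mul_comm] }
  have hf : ∀ n, f n = (n : ℝ)⁻¹ := fun n => rfl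
  have hE := (EulerProduct.summable_and_hasSum_factoredNumbers_prod_filter_prime_geometric
    (f := f) (fun {p} hp => by
      rw [hf, Real.norm_of_nonneg (by positivity)]
      exact inv_lt_one_of_one_lt₀ (by exact_mod_cast hp.one_lt)) d).2
  have hdf : d.filter Nat.Prime = d := Finset.filter_true_of_mem hd
  rw [hdf] at hE
  have hr : 0 < ∏ p ∈ d, p := Finset.prod_pos fun p hp => (hd p hp).pos
  have hdvd : ∀ n ∈ S, ∏ p ∈ d, p ∣ n := by
    intro n hn
    rw [← (hS n hn).2]
    exact Nat.prod_primeFactors_dvd n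
  have hmem : ∀ n ∈ S, n / (∏ p ∈ d, p) ∈ Nat.factoredNumbers d := by
    intro n hn
    rw [Nat.mem_factoredNumbers']
    intro p hp hpn
    rw [← (hS n hn).2, Nat.mem_primeFactors]
    exact ⟨hp, hpn.trans (Nat.div_dvd_of_dvd (hdvd n hn)), (hS n hn).1⟩
  have hle : ∑ n ∈ S, f (n / ∏ p ∈ d, p) ≤ ∏ p ∈ d, (1 - f p)⁻¹ := by
    have e : ∑ n ∈ S, f (n / ∏ p ∈ d, p) =
        ∑ m ∈ S.attach.image (fun n => (⟨n.1 / ∏ p ∈ d, p, hmem n.1 n.2⟩ : Nat.factoredNumbers d)),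
          f m := by
      rw [Finset.sum_image]
      · rw [← Finset.sum_attach]
      · rintro ⟨a, ha⟩ - ⟨b, hb⟩ - hab
        have h1 : a / (∏ p ∈ d, p) = b / (∏ p ∈ d, p) := congrArg Subtype.val hab
        have h2 : a = b := by
          rw [← Nat.div_mul_cancel (hdvd a ha), h1, Nat.div_mul_cancel (hdvd b hb)]
        exact Subtype.ext h2
    rw [e]
    exact sum_le_hasSum _ (fun m _ => by rw [hf]; positivity) hE
  have h1 : ∑ n ∈ S, (1 / n : ℝ) =
      (∏ p ∈ d, (p : ℝ)⁻¹) * ∑ n ∈ S, f (n / ∏ p ∈ d, p) := by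
    rw [Finset.mul_sum]
    refine Finset.sum_congr rfl fun n hn => ?_
    have hr' : ((∏ p ∈ d, p : ℕ) : ℝ) ≠ 0 := by exact_mod_cast hr.ne'
    rw [hf, Nat.cast_div (hdvd n hn) hr', Finset.prod_inv_distrib, ← Nat.cast_prod]
    field_simp
  rw [h1]
  calc _ ≤ (∏ p ∈ d, (p : ℝ)⁻¹) * ∏ p ∈ d, (1 - f p)⁻¹ := by gcongr
    _ = ∏ p ∈ d, (1 / (p - 1) : ℝ) := by
      rw [← Finset.prod_mul_distrib]
      refine Finset.prod_congr rfl fun p hp => ?_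
      have hp1 : (1 : ℝ) < p := by exact_mod_cast (hd p hp).one_lt
      have : (p : ℝ) - 1 ≠ 0 := by linarith
      rw [hf]
      field_simp

/-- Grouping the harmonic sum up to `w` by the squarefree kernel of the summation variable. -/
theorem log_le_sum_powerset (w : ℕ) (hw : 1 ≤ w) :
    Real.log w ≤ ∑ d ∈ (Nat.primesLE w).powerset.filter (fun d => ∏ p ∈ d, p ≤ w),
      ∏ p ∈ d, (1 / (p - 1) : ℝ) := by
  have h1 : Real.log w ≤ ∑ n ∈ Icc 1 w, (1 / n : ℝ) := by
    have h2 := log_add_one_le_harmonic w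
    have h3 : Real.log w ≤ Real.log ((w + 1 : ℕ) : ℝ) := by
      apply Real.log_le_log
      · exact_mod_cast hw
      · push_cast; linarith
    refine h3.trans (h2.trans (le_of_eq ?_))
    rw [harmonic_eq_sum_Icc]
    push_cast
    simp
  refine h1.trans ?_
  rw [← Finset.sum_fiberwise_of_maps_to (s := Icc 1 w) (g := fun n : ℕ => n.primeFactors)
    (t := (Nat.primesLE w).powerset.filter (fun d => ∏ p ∈ d, p ≤ w))]
  · apply Finset.sum_le_sum
    intro d hd
    rw [Finset.mem_filter, Finset.mem_powerset] at hd
    apply sum_inv_primeFactors_eq_le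
    · intro p hp
      exact (Nat.mem_primesLE.1 (hd.1 hp)).2
    · intro n hn
      rw [Finset.mem_filter, Finset.mem_Icc] at hn
      exact ⟨by omega, hn.2⟩
  · intro n hn
    rw [Finset.mem_Icc] at hn
    rw [Finset.mem_filter, Finset.mem_powerset]
    refine ⟨?_, (Nat.le_of_dvd hn.1 (Nat.prod_primeFactors_dvd n)).trans hn.2⟩
    intro p hp
    rw [Nat.mem_primesLE]
    exact ⟨(Nat.le_of_mem_primeFactors hp).trans hn.2, Nat.prime_of_mem_primeFactors hp⟩

/-- Removing the elements of `Q` from the sieving set costs at most the factor `∏ (1 + u p)` over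
`Q`. -/
theorem sum_powerset_le_mul (w : ℕ) (A Q : Finset ℕ) (hA : ∀ p ∈ A, 1 ≤ p) (hQ : Q ⊆ A)
    (u : ℕ → ℝ) (hu : ∀ p ∈ A, 0 ≤ u p) :
    ∑ d ∈ A.powerset.filter (fun d => ∏ p ∈ d, p ≤ w), ∏ p ∈ d, u p ≤
      (∑ d ∈ (A \ Q).powerset.filter (fun d => ∏ p ∈ d, p ≤ w), ∏ p ∈ d, u p) *
        ∏ p ∈ Q, (1 + u p) := by
  rw [Finset.prod_one_add, Finset.sum_mul_sum, ← Finset.sum_product']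
  have hinj : Set.InjOn (fun d : Finset ℕ => (d \ Q, d ∩ Q))
      (A.powerset.filter (fun d => ∏ p ∈ d, p ≤ w)) := by
    intro a _ b _ hab
    simp only [Prod.mk.injEq] at hab
    rw [← Finset.sdiff_union_inter a Q, hab.1, hab.2, Finset.sdiff_union_inter]
  have e : ∑ d ∈ A.powerset.filter (fun d => ∏ p ∈ d, p ≤ w), ∏ p ∈ d, u p =
      ∑ x ∈ (A.powerset.filter (fun d => ∏ p ∈ d, p ≤ w)).image
        (fun d : Finset ℕ => (d \ Q, d ∩ Q)), (∏ p ∈ x.1, u p) * ∏ p ∈ x.2, u p := by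
    rw [Finset.sum_image hinj]
    refine Finset.sum_congr rfl fun d _ => ?_
    rw [← Finset.prod_inter_mul_prod_sdiff d Q, mul_comm]
  rw [e]
  apply Finset.sum_le_sum_of_subset_of_nonneg
  · intro x hx
    rw [Finset.mem_image] at hx
    obtain ⟨d, hd, rfl⟩ := hx
    rw [Finset.mem_filter, Finset.mem_powerset] at hd
    simp only [Finset.mem_product, Finset.mem_filter, Finset.mem_powerset]
    refine ⟨⟨Finset.sdiff_subset_sdiff hd.1 le_rfl, le_trans ?_ hd.2⟩, Finset.inter_subset_right⟩
    exact Finset.prod_le_prod_of_subset_of_one_le' Finset.sdiff_subset fun p hp _ => hA p (hd.1 hp)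
  · intro x hx _
    simp only [Finset.mem_product, Finset.mem_filter, Finset.mem_powerset] at hx
    refine mul_nonneg (Finset.prod_nonneg fun p hp => ?_) (Finset.prod_nonneg fun p hp => ?_)
    · exact hu p (Finset.mem_sdiff.1 (hx.1.1 hp)).1
    · exact hu p (hQ (hx.2 hp))

theorem sum_union_eq (d : Finset ℕ) (u : ℕ → ℝ) :
    ∑ d₁ ∈ d.powerset, ∑ d₂ ∈ d.powerset.filter (fun d₂ => d₁ ∪ d₂ = d),
      (∏ p ∈ d₁, u p) * ∏ p ∈ d₂, u p = ∏ p ∈ d, (2 * u p + u p ^ 2) := by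
  have h1 : ∀ d₁ ∈ d.powerset, ∑ d₂ ∈ d.powerset.filter (fun d₂ => d₁ ∪ d₂ = d),
      (∏ p ∈ d₁, u p) * ∏ p ∈ d₂, u p =
      (∏ p ∈ d₁, u p * (1 + u p)) * ∏ p ∈ d \ d₁, u p := by
    intro d₁ hd₁
    rw [Finset.mem_powerset] at hd₁
    rw [← Finset.mul_sum, Finset.prod_mul_distrib, Finset.prod_one_add, mul_assoc]
    congr 1
    rw [Finset.sum_mul]
    apply Finset.sum_bij' (fun d₂ _ => d₂ ∩ d₁) (fun e _ => e ∪ (d \ d₁))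
    · intro d₂ _
      simp
    · intro e he
      rw [Finset.mem_powerset] at he
      rw [Finset.mem_filter, Finset.mem_powerset]
      refine ⟨Finset.union_subset (he.trans hd₁) Finset.sdiff_subset, ?_⟩
      ext x
      have := @he x
      have := @hd₁ x
      simp only [Finset.mem_union, Finset.mem_sdiff]
      tauto
    · intro d₂ hd₂
      rw [Finset.mem_filter, Finset.mem_powerset] at hd₂
      ext x
      have h3 := Finset.ext_iff.1 hd₂.2 x
      simp only [Finset.mem_union, Finset.mem_sdiff, Finset.mem_inter] at h3 ⊢
      tauto
    · intro e he
      rw [Finset.mem_powerset] at he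
      ext x
      have := @he x
      simp only [Finset.mem_union, Finset.mem_sdiff, Finset.mem_inter]
      tauto
    · intro d₂ hd₂
      rw [Finset.mem_filter, Finset.mem_powerset] at hd₂
      rw [← Finset.prod_inter_mul_prod_sdiff d₂ d₁]
      congr 2
      ext x
      have h3 := Finset.ext_iff.1 hd₂.2 x
      simp only [Finset.mem_union, Finset.mem_sdiff] at h3 ⊢
      tauto
  rw [Finset.sum_congr rfl h1, ← Finset.prod_add]
  refine Finset.prod_congr rfl fun p _ => ?_
  ring

/-- The square of a one-dimensional sieve sum is at most a two-dimensional one: the union of two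
sets of primes with products at most `w` has product at most `w ^ 2`. With `u p = 1 / (p - 1)` this
reduces the lower bound for Selberg's denominator to the harmonic sum. -/
theorem sq_sum_powerset_le (w : ℕ) (P : Finset ℕ) (hP : ∀ p ∈ P, 1 ≤ p)
    (u : ℕ → ℝ) (hu : ∀ p ∈ P, 0 ≤ u p) :
    (∑ d ∈ P.powerset.filter (fun d => ∏ p ∈ d, p ≤ w), ∏ p ∈ d, u p) ^ 2 ≤
      ∑ d ∈ P.powerset.filter (fun d => ∏ p ∈ d, p ≤ w ^ 2), ∏ p ∈ d, (2 * u p + u p ^ 2) := by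
  set S := P.powerset.filter (fun d => ∏ p ∈ d, p ≤ w) with hS
  have hu' : ∀ d ⊆ P, 0 ≤ ∏ p ∈ d, u p := fun d hd =>
    Finset.prod_nonneg fun p hp => hu p (hd hp)
  rw [sq, Finset.sum_mul_sum, ← Finset.sum_product',
    ← Finset.sum_fiberwise_of_maps_to (s := S ×ˢ S) (g := fun x : Finset ℕ × Finset ℕ => x.1 ∪ x.2)
      (t := P.powerset.filter (fun d => ∏ p ∈ d, p ≤ w ^ 2))]
  · apply Finset.sum_le_sum
    intro d hd
    rw [Finset.mem_filter, Finset.mem_powerset] at hd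
    rw [← sum_union_eq]
    have e : ∑ d₁ ∈ d.powerset, ∑ d₂ ∈ d.powerset.filter (fun d₂ => d₁ ∪ d₂ = d),
        (∏ p ∈ d₁, u p) * ∏ p ∈ d₂, u p =
        ∑ x ∈ (d.powerset ×ˢ d.powerset).filter (fun x => x.1 ∪ x.2 = d),
          (∏ p ∈ x.1, u p) * ∏ p ∈ x.2, u p := by
      rw [Finset.sum_filter, Finset.sum_product]
      exact Finset.sum_congr rfl fun d₁ _ => by rw [Finset.sum_filter]
    rw [e]
    apply Finset.sum_le_sum_of_subset_of_nonneg
    · intro x hx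
      rw [Finset.mem_filter] at hx
      rw [Finset.mem_filter, Finset.mem_product, Finset.mem_powerset, Finset.mem_powerset]
      refine ⟨⟨?_, ?_⟩, hx.2⟩
      · rw [← hx.2]; exact Finset.subset_union_left
      · rw [← hx.2]; exact Finset.subset_union_right
    · intro x hx _
      rw [Finset.mem_filter, Finset.mem_product, Finset.mem_powerset, Finset.mem_powerset] at hx
      exact mul_nonneg (hu' _ (hx.1.1.trans hd.1)) (hu' _ (hx.1.2.trans hd.1))
  · intro x hx
    simp only [hS, Finset.mem_product, Finset.mem_filter, Finset.mem_powerset] at hx ⊢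
    refine ⟨Finset.union_subset hx.1.1 hx.2.1, ?_⟩
    have h1 : 1 ≤ ∏ p ∈ x.1 ∩ x.2, p :=
      Finset.one_le_prod' fun p hp => hP p (hx.1.1 (Finset.mem_inter.1 hp).1)
    calc ∏ p ∈ x.1 ∪ x.2, p ≤ (∏ p ∈ x.1 ∪ x.2, p) * ∏ p ∈ x.1 ∩ x.2, p :=
          Nat.le_mul_of_pos_right _ h1
      _ = (∏ p ∈ x.1, p) * ∏ p ∈ x.2, p := Finset.prod_union_inter
      _ ≤ w * w := Nat.mul_le_mul hx.1.2 hx.2.2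
      _ = w ^ 2 := by ring

set_option maxHeartbeats 1000000 in
/-- An upper bound for the number of `n < N` with neither `n` nor `n + h` divisible by a prime `p ≤ w`, `p ∤ 2 h`. -/
theorem sieve_bound (N h w : ℕ) (hh : h ≠ 0) (hw : 2 ≤ w) :
    (((range N).filter (fun n => ∀ p ∈ Nat.primesLE w, ¬ p ∣ 2 * h → ¬ p ∣ n * (n + h))).card : ℝ) ≤
      N * Real.exp (2 + 4 * ∑ p ∈ h.primeFactors.filter (fun p => p ≠ 2), (1 / p : ℝ)) /
        (Real.log w) ^ 2 + (w : ℝ) ^ 8 := by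
  set A := Nat.primesLE w with hA
  set Q := A.filter (fun p => p ∣ 2 * h) with hQ
  have hQA : Q ⊆ A := Finset.filter_subset _ _
  have hAp : ∀ p ∈ A, p.Prime := fun p hp => (Nat.mem_primesLE.1 hp).2
  set u : ℕ → ℝ := fun p => 1 / (p - 1) with hu
  have hu0 : ∀ p ∈ A, 0 ≤ u p := fun p hp => by
    have : (1 : ℝ) ≤ p := by exact_mod_cast (hAp p hp).one_lt.le
    exact div_nonneg zero_le_one (by linarith)
  have hP3 : ∀ p ∈ A \ Q, 3 ≤ p := by
    intro p hp
    rw [Finset.mem_sdiff, hQ, Finset.mem_filter] at hp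
    have h2 := (hAp p hp.1).two_le
    rcases h2.lt_or_eq with h | h
    · exact h
    · exact absurd ⟨hp.1, h ▸ dvd_mul_right 2 _⟩ hp.2
  have hPh : ∀ p ∈ A \ Q, ¬ p ∣ h := by
    intro p hp hph
    rw [Finset.mem_sdiff, hQ, Finset.mem_filter] at hp
    exact hp.2 ⟨hp.1, hph.mul_left 2⟩
  have hPA : ∀ p ∈ A \ Q, p ∈ A := fun p hp => (Finset.mem_sdiff.1 hp).1
  have hsel := selberg_bound N h (w ^ 2) (Nat.one_le_pow _ _ (by omega)) (A \ Q)
    (fun p hp => hAp p (hPA p hp)) hP3 hPh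
  set L : ℝ := ∑ m ∈ (A \ Q).powerset.filter (fun m => ∏ p ∈ m, p ≤ w ^ 2),
    ∏ p ∈ m, (2 / (p - 2) : ℝ) with hL
  set s : ℝ := ∑ p ∈ h.primeFactors.filter (fun p => p ≠ 2), (1 / p : ℝ) with hs
  -- the primes dividing `2 h` cost a factor `exp (1 + 2 s)`
  have hQe : ∏ p ∈ Q, (1 + u p) ≤ Real.exp (1 + 2 * s) := by
    calc ∏ p ∈ Q, (1 + u p) ≤ ∏ p ∈ Q, Real.exp (u p) := by
          apply Finset.prod_le_prod
          · intro p hp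
            have := hu0 p (hQA hp)
            linarith
          · intro p _
            rw [add_comm]
            exact Real.add_one_le_exp _
      _ = Real.exp (∑ p ∈ Q, u p) := (Real.exp_sum _ _).symm
      _ ≤ Real.exp (1 + 2 * s) := by
        apply Real.exp_le_exp.2
        have hsub : Q ⊆ insert 2 (h.primeFactors.filter (fun p => p ≠ 2)) := by
          intro p hp
          rw [hQ, Finset.mem_filter] at hp
          rw [Finset.mem_insert, Finset.mem_filter, Nat.mem_primeFactors]
          by_cases hp2 : p = 2
          · exact Or.inl hp2
          · right
            have hpp := hAp p hp.1
            refine ⟨⟨hpp, ?_, hh⟩, hp2⟩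
            rcases hpp.dvd_mul.1 hp.2 with h' | h'
            · exact absurd ((Nat.prime_dvd_prime_iff_eq hpp Nat.prime_two).1 h') hp2
            · exact h'
        calc ∑ p ∈ Q, u p ≤ ∑ p ∈ insert 2 (h.primeFactors.filter (fun p => p ≠ 2)), u p := by
              apply Finset.sum_le_sum_of_subset_of_nonneg hsub
              intro p hp _
              have : (1 : ℝ) ≤ p := by
                rw [Finset.mem_insert, Finset.mem_filter] at hp
                rcases hp with rfl | hp
                · norm_num
                · exact_mod_cast (Nat.prime_of_mem_primeFactors hp.1).one_lt.le
              exact div_nonneg zero_le_one (by linarith)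
          _ = u 2 + ∑ p ∈ h.primeFactors.filter (fun p => p ≠ 2), u p := by
              rw [Finset.sum_insert (by simp)]
          _ ≤ 1 + 2 * s := by
              have : u 2 = 1 := by simp only [hu]; norm_num
              rw [this, hs, Finset.mul_sum]
              gcongr with p hp
              rw [Finset.mem_filter] at hp
              have h2 : (2 : ℝ) ≤ p := by
                exact_mod_cast (Nat.prime_of_mem_primeFactors hp.1).two_le
              simp only [hu]
              rw [mul_one_div, div_le_div_iff₀ (by linarith) (by linarith)]
              linarith
  have hlog := (log_le_sum_powerset w (by omega)).trans
    (sum_powerset_le_mul w A Q (fun p hp => (hAp p hp).one_lt.le) hQA u hu0)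
  set T : ℝ := ∑ d ∈ (A \ Q).powerset.filter (fun d => ∏ p ∈ d, p ≤ w), ∏ p ∈ d, u p with hT
  have hT0 : 0 ≤ T := Finset.sum_nonneg fun d hd => Finset.prod_nonneg fun p hp =>
    hu0 p (hPA p (Finset.mem_powerset.1 (Finset.mem_filter.1 hd).1 hp))
  have hTL : T ^ 2 ≤ L := by
    refine (sq_sum_powerset_le w (A \ Q) (fun p hp => (hAp p (hPA p hp)).one_lt.le) u
      (fun p hp => hu0 p (hPA p hp))).trans ?_
    apply Finset.sum_le_sum
    intro d hd
    have hd' := Finset.mem_powerset.1 (Finset.mem_filter.1 hd).1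
    apply Finset.prod_le_prod
    · intro p hp
      have := hu0 p (hPA p (hd' hp))
      positivity
    · intro p hp
      have h3 : (3 : ℝ) ≤ p := by exact_mod_cast hP3 p (hd' hp)
      simp only [hu]
      have h1 : (0 : ℝ) < p - 1 := by linarith
      have h2 : (0 : ℝ) < p - 2 := by linarith
      have e : 2 * (1 / ((p : ℝ) - 1)) + (1 / ((p : ℝ) - 1)) ^ 2 = (2 * p - 1) / ((p : ℝ) - 1) ^ 2 := by
        field_simp
        ring
      rw [e, div_le_div_iff₀ (by positivity) h2]
      nlinarith
  have hlogpos : 0 < Real.log w := Real.log_pos (by exact_mod_cast hw)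
  have hlT : Real.log w ≤ T * Real.exp (1 + 2 * s) :=
    hlog.trans (mul_le_mul_of_nonneg_left hQe hT0)
  clear_value T L s
  have hlL : (Real.log w) ^ 2 ≤ L * Real.exp (2 + 4 * s) := by
    calc (Real.log w) ^ 2 ≤ (T * Real.exp (1 + 2 * s)) ^ 2 := by gcongr
      _ = T ^ 2 * Real.exp (2 + 4 * s) := by
        rw [mul_pow, ← Real.exp_nat_mul]
        congr 2
        push_cast
        ring
      _ ≤ L * Real.exp (2 + 4 * s) := by gcongr
  have hLpos : 0 < L := by
    by_contra hneg
    have : L * Real.exp (2 + 4 * s) ≤ 0 :=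
      mul_nonpos_of_nonpos_of_nonneg (not_lt.1 hneg) (Real.exp_pos _).le
    nlinarith [pow_pos hlogpos 2]
  have hcard : ((range N).filter (fun n => ∀ p ∈ A, ¬ p ∣ 2 * h → ¬ p ∣ n * (n + h))) =
      (range N).filter (fun n => ∀ p ∈ A \ Q, ¬ p ∣ n * (n + h)) := by
    apply Finset.filter_congr
    intro n _
    constructor
    · intro H p hp
      have hpA := hPA p hp
      refine H p hpA fun h2 => ?_
      exact (Finset.mem_sdiff.1 hp).2 (Finset.mem_filter.2 ⟨hpA, h2⟩)
    · intro H p hp hp2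
      exact H p (Finset.mem_sdiff.2 ⟨hp, fun h3 => hp2 (Finset.mem_filter.1 h3).2⟩)
  rw [hcard]
  refine hsel.trans ?_
  have e8 : ((w ^ 2 : ℕ) : ℝ) ^ 4 = (w : ℝ) ^ 8 := by push_cast; ring
  rw [e8]
  refine add_le_add ?_ le_rfl
  rw [div_le_div_iff₀ hLpos (by positivity)]
  calc (N : ℝ) * (Real.log w) ^ 2 ≤ N * (L * Real.exp (2 + 4 * s)) := by gcongr
    _ = _ := by ring

/-- The sieve bound for prime pairs with difference `h`; `w` is a free parameter, to be chosen as a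
small power of `N`. The term `3 w ^ 8` also absorbs the primes `p ≤ w`. -/
theorem card_prime_pairs_le (N h w : ℕ) (hh : h ≠ 0) (hw : 2 ≤ w) :
    (((range N).filter (fun p => p.Prime ∧ (p + h).Prime)).card : ℝ) ≤
      N * Real.exp (2 + 4 * ∑ p ∈ h.primeFactors.filter (fun p => p ≠ 2), (1 / p : ℝ)) /
        (Real.log w) ^ 2 + 3 * (w : ℝ) ^ 8 := by
  have hsub : (range N).filter (fun p => p.Prime ∧ (p + h).Prime) ⊆ range (w + 1) ∪
      (range N).filter (fun n => ∀ p ∈ Nat.primesLE w, ¬ p ∣ 2 * h → ¬ p ∣ n * (n + h)) := by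
    intro n hn
    rw [Finset.mem_filter] at hn
    rw [Finset.mem_union, Finset.mem_range, Finset.mem_filter]
    by_cases hnw : n < w + 1
    · exact Or.inl hnw
    · right
      refine ⟨hn.1, fun p hp _ hdvd => ?_⟩
      rw [Nat.mem_primesLE] at hp
      rcases hp.2.dvd_mul.1 hdvd with h1 | h1
      · have := (Nat.prime_dvd_prime_iff_eq hp.2 hn.2.1).1 h1
        omega
      · have := (Nat.prime_dvd_prime_iff_eq hp.2 hn.2.2).1 h1
        omega
  have h1 := (Finset.card_le_card hsub).trans (Finset.card_union_le _ _)
  rw [Finset.card_range] at h1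
  have h2 := sieve_bound N h w hh hw
  have h3 : (((range N).filter (fun p => p.Prime ∧ (p + h).Prime)).card : ℝ) ≤ (w + 1) +
    (((range N).filter (fun n => ∀ p ∈ Nat.primesLE w, ¬ p ∣ 2 * h → ¬ p ∣ n * (n + h))).card : ℝ) := by
    exact_mod_cast h1
  have hw1 : (1 : ℝ) ≤ w := by exact_mod_cast (by omega : 1 ≤ w)
  have h4 : (w : ℝ) ≤ (w : ℝ) ^ 8 := le_self_pow₀ hw1 (by norm_num)
  linarith

/-! ### Squares modulo the order of `2` -/

theorem succ_pow_four_le (a : ℕ) : (a + 1) ^ 4 ≤ 64 * 2 ^ a := by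
  by_cases ha : a < 6
  · interval_cases a <;> norm_num
  · obtain ⟨b, rfl⟩ : ∃ b, a = b + 6 := ⟨a - 6, by omega⟩
    clear ha
    induction b with
    | zero => norm_num
    | succ n ih =>
      have h1 : (n + 1 + 6 + 1) ^ 4 ≤ 2 * (n + 6 + 1) ^ 4 := by
        ring_nf
        nlinarith [sq_nonneg (n : ℤ), Nat.zero_le (n ^ 4), Nat.zero_le (n ^ 3), Nat.zero_le (n ^ 2)]
      calc _ ≤ 2 * (n + 6 + 1) ^ 4 := h1
        _ ≤ 2 * (64 * 2 ^ (n + 6)) := by gcongr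
        _ = _ := by ring

/-- The divisor bound `d(n) ≪ n ^ (1/4)`: only primes below `16` can have
`(e + 1) ^ 4 > p ^ e`. -/
theorem card_divisors_pow_four_le (n : ℕ) (hn : n ≠ 0) :
    n.divisors.card ^ 4 ≤ 64 ^ 16 * n := by
  rw [Nat.card_divisors hn, ← Finset.prod_pow]
  have h1 : ∀ p ∈ n.primeFactors, (n.factorization p + 1) ^ 4 ≤
      (if p ∈ range 16 then 64 else 1) * p ^ n.factorization p := by
    intro p hp
    have hp2 := (Nat.prime_of_mem_primeFactors hp).two_le
    by_cases hp16 : p ∈ range 16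
    · rw [if_pos hp16]
      refine (succ_pow_four_le _).trans ?_
      gcongr
    · rw [if_neg hp16, one_mul]
      rw [Finset.mem_range, not_lt] at hp16
      calc (n.factorization p + 1) ^ 4 ≤ (2 ^ n.factorization p) ^ 4 := by
            gcongr
            exact Nat.lt_two_pow_self
        _ = 16 ^ n.factorization p := by rw [← pow_mul, mul_comm, pow_mul]; norm_num
        _ ≤ p ^ n.factorization p := by gcongr
  refine (Finset.prod_le_prod' h1).trans ?_
  rw [Finset.prod_mul_distrib]
  have h2 : ∏ p ∈ n.primeFactors, p ^ n.factorization p = n :=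
    Nat.prod_factorization_pow_eq_self hn
  rw [h2]
  gcongr
  rw [← Finset.prod_filter, Finset.prod_const]
  apply Nat.pow_le_pow_right (by norm_num)
  calc _ ≤ (range 16).card := by
        apply Finset.card_le_card
        intro p hp
        exact (Finset.mem_filter.1 hp).2
    _ = 16 := by simp

theorem card_divisors_le_rpow (n : ℕ) (hn : n ≠ 0) :
    (n.divisors.card : ℝ) ≤ 64 ^ 4 * (n : ℝ) ^ (1 / 4 : ℝ) := by
  have h := card_divisors_pow_four_le n hn
  have h1 : (n.divisors.card : ℝ) ^ 4 ≤ 64 ^ 16 * n := by exact_mod_cast h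
  have h2 : (64 ^ 4 * (n : ℝ) ^ (1 / 4 : ℝ)) ^ 4 = 64 ^ 16 * n := by
    rw [mul_pow, ← Real.rpow_natCast ((n : ℝ) ^ (1 / 4 : ℝ)), ← Real.rpow_mul (by positivity)]
    norm_num
  rw [← h2] at h1
  exact le_of_pow_le_pow_left₀ (by norm_num) (by positivity) h1

/-- If the squares of the elements of `S` agree modulo `k`, then for fixed `m₀ ∈ S` each `m ∈ S`
satisfies `k ∣ (m - m₀) (m + m₀)`, so one of the factors is divisible by a divisor of `k` that is
at least `√k`. -/
theorem card_squares_modEq_le (M k : ℕ) (hk : k ≠ 0) (S : Finset ℕ) (hS : S ⊆ range M)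
    (hsq : ∀ a ∈ S, ∀ b ∈ S, a ^ 2 ≡ b ^ 2 [MOD k]) :
    (S.card : ℝ) ≤ k.divisors.card * (2 * (M / √k + 1)) := by
  have hk0 : (0 : ℝ) < k := by exact_mod_cast Nat.pos_of_ne_zero hk
  have hsk : 0 < √(k : ℝ) := Real.sqrt_pos.2 hk0
  rcases S.eq_empty_or_nonempty with rfl | ⟨m₀, hm₀⟩
  · simp only [Finset.card_empty, Nat.cast_zero]
    positivity
  set G := k.divisors.filter (fun g => k ≤ g ^ 2) with hG
  set F : ℕ → Finset ℕ := fun g => (range M).filter (fun n => n ≡ m₀ [MOD g]) ∪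
    (range M).filter (fun n => n ≡ (g * m₀ - m₀) [MOD g]) with hF
  have hsub : S ⊆ G.biUnion F := by
    intro m hm
    have h1 : (k : ℤ) ∣ ((m : ℤ) - m₀) * ((m : ℤ) + m₀) := by
      have h2 := (Nat.modEq_iff_dvd.1 (hsq m₀ hm₀ m hm))
      push_cast at h2
      convert h2 using 1
      ring
    obtain ⟨d₁, d₂, hd₁, hd₂, hd⟩ := exists_dvd_and_dvd_of_dvd_mul h1
    have hkd : k = d₁.natAbs * d₂.natAbs := by
      rw [← Int.natAbs_mul, ← hd, Int.natAbs_natCast]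
    rw [Finset.mem_biUnion]
    have hmM := hS hm
    by_cases hle : d₂.natAbs ≤ d₁.natAbs
    · refine ⟨d₁.natAbs, ?_, ?_⟩
      · rw [hG, Finset.mem_filter, Nat.mem_divisors]
        refine ⟨⟨⟨_, hkd⟩, hk⟩, ?_⟩
        conv_lhs => rw [hkd]
        rw [sq]
        exact Nat.mul_le_mul_left _ hle
      · rw [hF]
        refine Finset.mem_union_left _ (Finset.mem_filter.2 ⟨hmM, ?_⟩)
        refine (Nat.modEq_iff_dvd.2 ?_).symm
        exact Int.natAbs_dvd.2 hd₁
    · refine ⟨d₂.natAbs, ?_, ?_⟩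
      · rw [hG, Finset.mem_filter, Nat.mem_divisors]
        refine ⟨⟨⟨d₁.natAbs, by rw [mul_comm]; exact hkd⟩, hk⟩, ?_⟩
        conv_lhs => rw [hkd]
        rw [sq]
        exact Nat.mul_le_mul_right _ (not_le.1 hle).le
      · rw [hF]
        refine Finset.mem_union_right _ (Finset.mem_filter.2 ⟨hmM, ?_⟩)
        have hpos : 0 < d₂.natAbs := by
          rcases Nat.eq_zero_or_pos d₂.natAbs with h0 | h0
          · rw [h0] at hkd; simp at hkd; exact absurd hkd hk
          · exact h0
        refine (Nat.modEq_iff_dvd.2 ?_).symm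
        rw [Nat.cast_sub (Nat.le_mul_of_pos_left m₀ hpos)]
        have h3 : ((d₂.natAbs : ℕ) : ℤ) ∣ (m : ℤ) + m₀ := Int.natAbs_dvd.2 hd₂
        have h4 : (m : ℤ) - (((d₂.natAbs * m₀ : ℕ) : ℤ) - m₀) =
          ((m : ℤ) + m₀) - ((d₂.natAbs : ℕ) : ℤ) * m₀ := by push_cast; ring
        rw [h4]
        exact dvd_sub h3 (dvd_mul_right _ _)
  have hone : ∀ g ∈ G, ((F g).card : ℝ) ≤ 2 * (M / √k + 1) := by
    intro g hg
    rw [hG, Finset.mem_filter, Nat.mem_divisors] at hg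
    have hg0 : 0 < g := Nat.pos_of_dvd_of_pos hg.1.1 (Nat.pos_of_ne_zero hk)
    have hgs : √(k : ℝ) ≤ g := by
      rw [Real.sqrt_le_left (by positivity)]
      exact_mod_cast hg.2
    have hMg : (M : ℝ) / g ≤ M / √k := by gcongr
    have h1 : ((F g).card : ℝ) ≤ ((range M).filter (fun n => n ≡ m₀ [MOD g])).card +
      ((range M).filter (fun n => n ≡ (g * m₀ - m₀) [MOD g])).card := by
      exact_mod_cast Finset.card_union_le _ _
    have h2 := (abs_le.1 (abs_card_modEq_sub_le M g m₀ hg0)).2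
    have h3 := (abs_le.1 (abs_card_modEq_sub_le M g (g * m₀ - m₀) hg0)).2
    linarith
  calc (S.card : ℝ) ≤ ((G.biUnion F).card : ℝ) := by exact_mod_cast Finset.card_le_card hsub
    _ ≤ ∑ g ∈ G, ((F g).card : ℝ) := by exact_mod_cast Finset.card_biUnion_le
    _ ≤ ∑ g ∈ G, 2 * (M / √k + 1) := Finset.sum_le_sum hone
    _ = G.card * (2 * (M / √k + 1)) := by rw [Finset.sum_const, nsmul_eq_mul]
    _ ≤ k.divisors.card * (2 * (M / √k + 1)) := by
      gcongr
      exact Finset.filter_subset _ _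

/-- The multiplicative order of `2` modulo `p`. -/
noncomputable def ordTwo (p : ℕ) : ℕ := orderOf (2 : ZMod p)

theorem two_ne_zero_zmod {p : ℕ} (hp : p.Prime) (hp2 : p ≠ 2) : (2 : ZMod p) ≠ 0 := by
  intro h
  have h1 : ((2 : ℕ) : ZMod p) = 0 := by exact_mod_cast h
  rw [ZMod.natCast_eq_zero_iff] at h1
  exact hp2 ((Nat.prime_dvd_prime_iff_eq hp Nat.prime_two).1 h1)

theorem ordTwo_dvd {p : ℕ} (hp : p.Prime) (hp2 : p ≠ 2) : ordTwo p ∣ p - 1 := by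
  have := Fact.mk hp
  exact ZMod.orderOf_dvd_card_sub_one (two_ne_zero_zmod hp hp2)

theorem ordTwo_pos {p : ℕ} (hp : p.Prime) (hp2 : p ≠ 2) : 0 < ordTwo p :=
  Nat.pos_of_dvd_of_pos (ordTwo_dvd hp hp2) (by have := hp.two_le; omega)

theorem ordTwo_le {p : ℕ} (hp : p.Prime) (hp2 : p ≠ 2) : ordTwo p ≤ p - 1 :=
  Nat.le_of_dvd (by have := hp.two_le; omega) (ordTwo_dvd hp hp2)

theorem dvd_two_pow_ordTwo_sub_one (p : ℕ) : p ∣ 2 ^ ordTwo p - 1 := by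
  rw [← ZMod.natCast_eq_zero_iff, Nat.cast_sub Nat.one_le_two_pow]
  push_cast
  rw [ordTwo, pow_orderOf_eq_one, sub_self]

theorem two_pow_eq_imp {p : ℕ} (hp : p.Prime) (hp2 : p ≠ 2) {a b : ℕ}
    (h : (2 : ZMod p) ^ a = 2 ^ b) : a ≡ b [MOD ordTwo p] := by
  have := Fact.mk hp
  have h1 : (Units.mk0 (2 : ZMod p) (two_ne_zero_zmod hp hp2)) ^ a =
      (Units.mk0 (2 : ZMod p) (two_ne_zero_zmod hp hp2)) ^ b := by
    ext
    simpa using h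
  have h2 := pow_eq_pow_iff_modEq.1 h1
  rwa [← orderOf_units, Units.val_mk0] at h2

/-- If `2 ^ (m ^ 2)` is fixed modulo `p`, then `m ^ 2` is fixed modulo `k = ordTwo p`, and the divisor
bound together with `k ≤ M ^ 2` saves the factor `k ^ (-1/4)` over the trivial bound `M`. -/
theorem card_two_pow_sq_eq_le (M p : ℕ) (hp : p.Prime) (hp2 : p ≠ 2) (hpM : p ≤ M ^ 2)
    (c : ZMod p) :
    (((range M).filter (fun m => (2 : ZMod p) ^ (m ^ 2) = c)).card : ℝ) ≤
      64 ^ 4 * 4 * M * (ordTwo p : ℝ) ^ (-(1 / 4) : ℝ) := by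
  have hk := ordTwo_pos hp hp2
  have hkM : ordTwo p ≤ M ^ 2 := (ordTwo_le hp hp2).trans (by omega)
  have h1 := card_squares_modEq_le M (ordTwo p) hk.ne'
    ((range M).filter (fun m => (2 : ZMod p) ^ (m ^ 2) = c)) (Finset.filter_subset _ _) (by
      intro a ha b hb
      rw [Finset.mem_filter] at ha hb
      exact two_pow_eq_imp hp hp2 (ha.2.trans hb.2.symm))
  have h2 := card_divisors_le_rpow (ordTwo p) hk.ne'
  set k := ordTwo p with hkdef
  have hk0 : (0 : ℝ) < k := by exact_mod_cast hk
  have hsk : 0 < √(k : ℝ) := Real.sqrt_pos.2 hk0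
  have h3 : 1 ≤ (M : ℝ) / √k := by
    rw [one_le_div hsk, Real.sqrt_le_left (by positivity)]
    exact_mod_cast hkM
  calc _ ≤ _ := h1
    _ ≤ (64 ^ 4 * (k : ℝ) ^ (1 / 4 : ℝ)) * (2 * (M / √k + M / √k)) := by gcongr
    _ = 64 ^ 4 * 4 * M * ((k : ℝ) ^ (1 / 4 : ℝ) / √k) := by ring
    _ = _ := by
      rw [Real.sqrt_eq_rpow, ← Real.rpow_sub hk0]
      norm_num

/-! ### Primes with a given order of `2` -/

/-- The upper half of Mertens' first theorem, from `∏ p ^ ⌊n / p⌋ ∣ n !` and Chebyshev's bound for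
`θ`. -/
theorem sum_log_div_primesLE_le (n : ℕ) (hn : 1 ≤ n) :
    ∑ p ∈ Nat.primesLE n, Real.log p / p ≤ Real.log n + Real.log 4 := by
  have hn0 : (0 : ℝ) < n := by exact_mod_cast hn
  have hdvd : ∏ p ∈ Nat.primesLE n, p ^ (n / p) ∣ n.factorial := by
    apply Finset.prod_dvd_of_isRelPrime
    · intro p hp q hq hpq
      exact Nat.coprime_iff_isRelPrime.1 (Nat.Coprime.pow _ _ ((Nat.coprime_primes
        (Nat.prime_of_mem_primesLE hp) (Nat.prime_of_mem_primesLE hq)).2 hpq))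
    · intro p hp
      rw [(Nat.prime_of_mem_primesLE hp).pow_dvd_factorial_iff (b := Nat.log p n + 2) (by omega)]
      calc n / p = n / p ^ 1 := by simp
        _ ≤ _ := Finset.single_le_sum (f := fun i => n / p ^ i) (fun _ _ => Nat.zero_le _)
          (by simp)
  have hle : ∏ p ∈ Nat.primesLE n, p ^ (n / p) ≤ n ^ n :=
    (Nat.le_of_dvd (Nat.factorial_pos n) hdvd).trans (Nat.factorial_le_pow n)
  have hpos : ∀ p ∈ Nat.primesLE n, (0 : ℝ) < p := fun p hp => by
    exact_mod_cast (Nat.prime_of_mem_primesLE hp).pos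
  have h1 : ∑ p ∈ Nat.primesLE n, ((n / p : ℕ) : ℝ) * Real.log p ≤ n * Real.log n := by
    have := Real.log_le_log (by
      exact_mod_cast Finset.prod_pos fun p hp => pow_pos (Nat.prime_of_mem_primesLE hp).pos _)
      (show ((∏ p ∈ Nat.primesLE n, p ^ (n / p) : ℕ) : ℝ) ≤ ((n ^ n : ℕ) : ℝ) by exact_mod_cast hle)
    push_cast at this
    rw [Real.log_prod (fun p hp => (pow_pos (hpos p hp) _).ne'), Real.log_pow] at this
    simpa [Real.log_pow] using this
  have h2 : ∑ p ∈ Nat.primesLE n, Real.log p ≤ Real.log 4 * n := by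
    rw [← Chebyshev.theta_eq_sum_primesLE_log]
    exact Chebyshev.theta_le_log4_mul_x hn0.le
  have h3 : n * ∑ p ∈ Nat.primesLE n, Real.log p / p ≤
      ∑ p ∈ Nat.primesLE n, ((n / p : ℕ) : ℝ) * Real.log p + ∑ p ∈ Nat.primesLE n, Real.log p := by
    rw [Finset.mul_sum, ← Finset.sum_add_distrib]
    apply Finset.sum_le_sum
    intro p hp
    have hlt : (n : ℝ) / p ≤ (n / p : ℕ) + 1 := by
      rw [div_le_iff₀ (hpos p hp)]
      have := Nat.lt_div_mul_add (a := n) (Nat.prime_of_mem_primesLE hp).pos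
      have h' : n ≤ (n / p + 1) * p := by linarith
      exact_mod_cast h'
    have hlog : 0 ≤ Real.log p := Real.log_natCast_nonneg p
    calc (n : ℝ) * (Real.log p / p) = n / p * Real.log p := by ring
      _ ≤ ((n / p : ℕ) + 1) * Real.log p := by gcongr
      _ = _ := by ring
  have h4 : n * ∑ p ∈ Nat.primesLE n, Real.log p / p ≤ n * (Real.log n + Real.log 4) := by
    linarith
  exact le_of_mul_le_mul_left h4 hn0

/-- A weak form of Mertens' theorem: the sum of reciprocals of the primes up to `n` grows slower
than `log n / 64`. -/
theorem exists_sum_inv_primesLE_le : ∃ C : ℝ, ∀ n : ℕ, 1 ≤ n →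
    ∑ p ∈ Nat.primesLE n, (1 / p : ℝ) ≤ C + Real.log n / 64 := by
  refine ⟨(⌈Real.exp 64⌉₊ + 1 : ℕ) + Real.log 4 / 64, fun n hn => ?_⟩
  have hpt : ∀ p ∈ Nat.primesLE n, (1 / p : ℝ) ≤
      (if p ∈ range (⌈Real.exp 64⌉₊ + 1) then 1 else 0) + Real.log p / p / 64 := by
    intro p hp
    have hp1 : (1 : ℝ) ≤ p := by exact_mod_cast (Nat.prime_of_mem_primesLE hp).one_le
    have hlog : 0 ≤ Real.log p := Real.log_natCast_nonneg p
    split_ifs with h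
    · have : (1 / p : ℝ) ≤ 1 := by rw [div_le_one (by linarith)]; exact hp1
      have : 0 ≤ Real.log p / p / 64 := by positivity
      linarith
    · have h64 : 64 ≤ Real.log p := by
        rw [Real.le_log_iff_exp_le (by linarith)]
        refine (Nat.le_ceil _).trans ?_
        simp only [mem_range, not_lt] at h
        exact_mod_cast (Nat.le_succ _).trans h
      rw [zero_add, div_div, div_le_div_iff₀ (by linarith) (by linarith)]
      nlinarith
  calc _ ≤ _ := Finset.sum_le_sum hpt
    _ = ∑ p ∈ Nat.primesLE n, (if p ∈ range (⌈Real.exp 64⌉₊ + 1) then (1 : ℝ) else 0)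
        + (∑ p ∈ Nat.primesLE n, Real.log p / p) / 64 := by
          rw [Finset.sum_add_distrib, Finset.sum_div]
    _ ≤ (⌈Real.exp 64⌉₊ + 1 : ℕ) + (Real.log n + Real.log 4) / 64 := by
          gcongr
          · rw [← Finset.sum_filter, Finset.sum_const, nsmul_eq_mul, mul_one]
            calc _ ≤ ((range (⌈Real.exp 64⌉₊ + 1)).card : ℝ) := by
                  exact_mod_cast Finset.card_le_card fun p hp => (Finset.mem_filter.1 hp).2
              _ = _ := by simp
          · exact sum_log_div_primesLE_le n hn
    _ = _ := by ring

/-- Distinct odd primes whose order of `2` is `k` all divide `2 ^ k - 1`, so there are at most `k`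
of them. -/
theorem card_ordTwo_eq_le (A : Finset ℕ) (hA : ∀ p ∈ A, p.Prime ∧ p ≠ 2) (k : ℕ) (hk : 1 ≤ k) :
    (A.filter (fun p => ordTwo p = k)).card ≤ k := by
  have hdvd : ∏ p ∈ A.filter (fun p => ordTwo p = k), p ∣ 2 ^ k - 1 := by
    apply Finset.prod_primes_dvd
    · intro p hp
      exact (hA p (Finset.mem_filter.1 hp).1).1.prime
    · intro p hp
      rw [← (Finset.mem_filter.1 hp).2]
      exact dvd_two_pow_ordTwo_sub_one p
  have h2k : 2 ≤ 2 ^ k := by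
    calc 2 = 2 ^ 1 := rfl
      _ ≤ _ := Nat.pow_le_pow_right (by norm_num) hk
  have h1 : 2 ^ (A.filter (fun p => ordTwo p = k)).card ≤ 2 ^ k := by
    calc _ ≤ ∏ p ∈ A.filter (fun p => ordTwo p = k), p :=
          Finset.pow_card_le_prod _ _ _ fun p hp => (hA p (Finset.mem_filter.1 hp).1).1.two_le
      _ ≤ 2 ^ k - 1 := Nat.le_of_dvd (by omega) hdvd
      _ ≤ _ := Nat.sub_le _ _
  exact (Nat.pow_le_pow_iff_right (by norm_num)).1 h1

/-- The primes with order `k` are `≡ 1` modulo `k`. Those up to `k ^ 2` are compared with a harmonic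
sum, and there are at most `k` larger ones. -/
theorem sum_inv_ordTwo_eq_le (A : Finset ℕ) (hA : ∀ p ∈ A, p.Prime ∧ p ≠ 2) (k : ℕ)
    (hk : 1 ≤ k) :
    ∑ p ∈ A.filter (fun p => ordTwo p = k), (1 / p : ℝ) ≤ (2 + Real.log k) / k := by
  have hk0 : (0 : ℝ) < k := by exact_mod_cast hk
  rw [← Finset.sum_filter_add_sum_filter_not _ (fun p => p ≤ k ^ 2)]
  have h1 : ∑ p ∈ (A.filter (fun p => ordTwo p = k)).filter (fun p => p ≤ k ^ 2), (1 / p : ℝ) ≤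
      (1 + Real.log k) / k := by
    have key : ∀ p ∈ (A.filter (fun p => ordTwo p = k)).filter (fun p => p ≤ k ^ 2),
        ∃ j, p = 1 + k * j ∧ (p - 1) / k = j ∧ j ∈ Icc 1 k := by
      intro p hp
      simp only [Finset.mem_filter] at hp
      obtain ⟨⟨hpA, hord⟩, hpk⟩ := hp
      obtain ⟨hpp, hp2⟩ := hA p hpA
      obtain ⟨j, hj⟩ := ordTwo_dvd hpp hp2
      rw [hord] at hj
      have hp1 := hpp.two_le
      refine ⟨j, by omega, by rw [hj]; exact Nat.mul_div_cancel_left j hk, ?_⟩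
      rw [Finset.mem_Icc]
      constructor
      · rcases Nat.eq_zero_or_pos j with rfl | h
        · simp at hj; omega
        · exact h
      · by_contra hcon
        have h5 : k * (k + 1) ≤ k * j := Nat.mul_le_mul_left k (by omega)
        have h6 : p = k * j + 1 := by omega
        nlinarith
    calc _ ≤ ∑ p ∈ (A.filter (fun p => ordTwo p = k)).filter (fun p => p ≤ k ^ 2),
          (1 / k : ℝ) * (((p - 1) / k : ℕ) : ℝ)⁻¹ := by
          apply Finset.sum_le_sum
          intro p hp
          obtain ⟨j, h1, h2, h3⟩ := key p hp
          rw [h2]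
          have hj0 : (0 : ℝ) < j := by exact_mod_cast (Finset.mem_Icc.1 h3).1
          rw [← one_div, one_div_mul_one_div]
          apply one_div_le_one_div_of_le (by positivity)
          rw [h1]
          push_cast
          linarith
      _ = ∑ j ∈ ((A.filter (fun p => ordTwo p = k)).filter (fun p => p ≤ k ^ 2)).image
          (fun p => (p - 1) / k), (1 / k : ℝ) * (j : ℝ)⁻¹ := by
          rw [Finset.sum_image]
          intro p hp q hq hpq
          obtain ⟨j, h1, h2, h3⟩ := key p hp
          obtain ⟨j', h1', h2', h3'⟩ := key q hq
          have : j = j' := by rw [← h2, ← h2']; exact hpq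
          rw [h1, h1', this]
      _ ≤ ∑ j ∈ Icc 1 k, (1 / k : ℝ) * (j : ℝ)⁻¹ := by
          apply Finset.sum_le_sum_of_subset_of_nonneg
          · intro j hj
            obtain ⟨p, hp, rfl⟩ := Finset.mem_image.1 hj
            obtain ⟨j, h1, h2, h3⟩ := key p hp
            rwa [h2]
          · intros; positivity
      _ = (1 / k : ℝ) * ((harmonic k : ℚ) : ℝ) := by
          rw [← Finset.mul_sum, harmonic_eq_sum_Icc]
          push_cast
          rfl
      _ ≤ (1 / k : ℝ) * (1 + Real.log k) := by
          gcongr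
          exact harmonic_le_one_add_log k
      _ = _ := by ring
  have h2 : ∑ p ∈ (A.filter (fun p => ordTwo p = k)).filter (fun p => ¬ p ≤ k ^ 2), (1 / p : ℝ) ≤
      1 / k := by
    calc _ ≤ ∑ p ∈ (A.filter (fun p => ordTwo p = k)).filter (fun p => ¬ p ≤ k ^ 2),
          (1 / k ^ 2 : ℝ) := by
          apply Finset.sum_le_sum
          intro p hp
          have : k ^ 2 < p := not_le.1 (Finset.mem_filter.1 hp).2
          have : (k : ℝ) ^ 2 ≤ p := by exact_mod_cast this.le
          gcongr
      _ ≤ k * (1 / k ^ 2 : ℝ) := by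
          rw [Finset.sum_const, nsmul_eq_mul]
          gcongr
          exact (Finset.card_le_card (Finset.filter_subset _ _)).trans (card_ordTwo_eq_le A hA k hk)
      _ = _ := by field_simp
  calc _ ≤ (1 + Real.log k) / k + 1 / k := add_le_add h1 h2
    _ = _ := by ring

theorem card_ordTwo_le_le (A : Finset ℕ) (hA : ∀ p ∈ A, p.Prime ∧ p ≠ 2) (k : ℕ) :
    (A.filter (fun p => ordTwo p ≤ k)).card ≤ k ^ 2 := by
  have hsub : A.filter (fun p => ordTwo p ≤ k) ⊆
      (Icc 1 k).biUnion fun j => A.filter (fun p => ordTwo p = j) := by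
    intro p hp
    obtain ⟨hpA, hpk⟩ := Finset.mem_filter.1 hp
    simp only [Finset.mem_biUnion, Finset.mem_filter, Finset.mem_Icc]
    exact ⟨ordTwo p, ⟨ordTwo_pos (hA p hpA).1 (hA p hpA).2, hpk⟩, hpA, rfl⟩
  calc _ ≤ _ := Finset.card_le_card hsub
    _ ≤ (Icc 1 k).card * k := Finset.card_biUnion_le_card_mul _ _ _ fun j hj =>
        (card_ordTwo_eq_le A hA j (Finset.mem_Icc.1 hj).1).trans (Finset.mem_Icc.1 hj).2
    _ = k ^ 2 := by simp [sq]

/-- The at most `k ^ 2` primes with order at most `k` have reciprocal sum at most that of the primes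
up to `k ^ 2`, plus `1`. -/
theorem exists_exp_sum_ordTwo_le : ∃ C : ℝ, 0 < C ∧ ∀ (A : Finset ℕ),
    (∀ p ∈ A, p.Prime ∧ p ≠ 2) → ∀ k : ℕ, 1 ≤ k →
    Real.exp (4 * ∑ p ∈ A.filter (fun p => ordTwo p ≤ k), (1 / p : ℝ)) ≤
      C * (k : ℝ) ^ (1 / 8 : ℝ) := by
  obtain ⟨D, hD⟩ := exists_sum_inv_primesLE_le
  refine ⟨Real.exp (4 * (D + 1)), Real.exp_pos _, fun A hA k hk => ?_⟩
  have hk0 : (0 : ℝ) < k := by exact_mod_cast hk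
  have h1 : ∑ p ∈ A.filter (fun p => ordTwo p ≤ k), (1 / p : ℝ) ≤
      (D + Real.log ((k ^ 2 : ℕ) : ℝ) / 64) + 1 := by
    rw [← Finset.sum_filter_add_sum_filter_not _ (fun p => p ≤ k ^ 2)]
    apply add_le_add
    · refine le_trans ?_ (hD (k ^ 2) (Nat.one_le_pow _ _ hk))
      apply Finset.sum_le_sum_of_subset_of_nonneg
      · intro p hp
        simp only [Finset.mem_filter] at hp
        exact Nat.mem_primesLE.2 ⟨hp.2, (hA p hp.1.1).1⟩
      · intros; positivity
    · calc ∑ p ∈ (A.filter (fun p => ordTwo p ≤ k)).filter (fun p => ¬ p ≤ k ^ 2), (1 / p : ℝ)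
        _ ≤ ∑ p ∈ (A.filter (fun p => ordTwo p ≤ k)).filter (fun p => ¬ p ≤ k ^ 2),
            (1 / k ^ 2 : ℝ) := by
          apply Finset.sum_le_sum
          intro p hp
          have : k ^ 2 < p := not_le.1 (Finset.mem_filter.1 hp).2
          have : (k : ℝ) ^ 2 ≤ p := by exact_mod_cast this.le
          gcongr
        _ ≤ (k ^ 2 : ℕ) * (1 / k ^ 2 : ℝ) := by
          rw [Finset.sum_const, nsmul_eq_mul]
          gcongr
          exact (Finset.card_le_card (Finset.filter_subset _ _)).trans (card_ordTwo_le_le A hA k)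
        _ = _ := by push_cast; field_simp
  rw [Real.rpow_def_of_pos hk0, ← Real.exp_add]
  apply Real.exp_le_exp.2
  push_cast at h1
  rw [Real.log_pow] at h1
  push_cast at h1
  linarith

/-- Partial summation for the exponential, from `1 - t ≤ exp (-t)`. It replaces the expansion of the
singular series as a sum over squarefree divisors. -/
theorem exp_sum_le_telescope (s : ℕ → ℝ) (n : ℕ) :
    Real.exp (4 * ∑ k ∈ range n, s k) ≤
      1 + ∑ k ∈ range n, 4 * s k * Real.exp (4 * ∑ j ∈ range (k + 1), s j) := by
  induction n with
  | zero => simp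
  | succ n ih =>
    rw [Finset.sum_range_succ (fun k => 4 * s k * Real.exp (4 * ∑ j ∈ range (k + 1), s j)) n]
    have h1 : Real.exp (4 * ∑ k ∈ range (n + 1), s k) * (1 - 4 * s n) ≤
        Real.exp (4 * ∑ k ∈ range n, s k) := by
      have h2 : 1 - 4 * s n ≤ Real.exp (-(4 * s n)) := by
        linarith [Real.add_one_le_exp (-(4 * s n))]
      calc _ ≤ Real.exp (4 * ∑ k ∈ range (n + 1), s k) * Real.exp (-(4 * s n)) := by gcongr
        _ = _ := by rw [← Real.exp_add, Finset.sum_range_succ]; ring_nf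
    linarith

/-! ### The average of the singular series -/

/-- Averaging of the singular series: if every odd prime `p ≤ M ^ 2` divides `h x` for a proportion
at most `C₀ (ordTwo p) ^ (-1/4)` of the `x`, then the exponentials of the sums `∑_{p ∣ h x} 1 / p`
are bounded on average. -/
theorem exists_sum_exp_le (C₀ : ℝ) (hC₀ : 0 ≤ C₀) : ∃ C : ℝ, 0 < C ∧
    ∀ (α : Type) (X : Finset α) (h : α → ℕ) (M : ℕ) (B : ℝ), 1 ≤ M →
      (∀ x ∈ X, h x ≠ 0 ∧ h x ≤ 2 ^ (M ^ 2)) → (X.card : ℝ) ≤ B →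
      (∀ p : ℕ, p.Prime → p ≠ 2 → p ≤ M ^ 2 →
        ((X.filter (fun x => p ∣ h x)).card : ℝ) ≤ C₀ * B * (ordTwo p : ℝ) ^ (-(1 / 4) : ℝ)) →
      ∑ x ∈ X, Real.exp (2 + 4 * ∑ p ∈ (h x).primeFactors.filter (fun p => p ≠ 2), (1 / p : ℝ))
        ≤ C * B := by
  obtain ⟨C₁, hC₁, hexp⟩ := exists_exp_sum_ordTwo_le
  have hsum : Summable (fun n : ℕ => (n : ℝ) ^ (-(17 / 16) : ℝ)) :=
    Real.summable_nat_rpow.2 (by norm_num)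
  set T := ∑' n : ℕ, (n : ℝ) ^ (-(17 / 16) : ℝ) with hT
  have hT0 : 0 ≤ T := tsum_nonneg fun n => by positivity
  refine ⟨Real.exp 6 * (1 + 72 * C₁ * C₀ * T), by positivity, ?_⟩
  intro α X h M B hM hX hB hdiv
  have hB0 : 0 ≤ B := le_trans (by positivity) hB
  have hM0 : (0 : ℝ) < M := by exact_mod_cast hM
  set P := (Nat.primesLE (M ^ 2)).filter (fun p => p ≠ 2) with hP
  set A : α → Finset ℕ := fun x => P.filter (fun p => p ∣ h x) with hA
  have hPp : ∀ p ∈ P, p.Prime ∧ p ≠ 2 := by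
    intro p hp
    simp only [hP, Finset.mem_filter, Nat.mem_primesLE] at hp
    exact ⟨hp.1.2, hp.2⟩
  have hPle : ∀ p ∈ P, p ≤ M ^ 2 := by
    intro p hp
    simp only [hP, Finset.mem_filter, Nat.mem_primesLE] at hp
    exact hp.1.1
  have hAp : ∀ x, ∀ p ∈ A x, p.Prime ∧ p ≠ 2 := fun x p hp => hPp p (Finset.mem_filter.1 hp).1
  -- the primes above `M ^ 2` contribute at most `1`
  have hbig : ∀ x ∈ X, ∑ p ∈ (h x).primeFactors.filter (fun p => p ≠ 2), (1 / p : ℝ) ≤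
      ∑ p ∈ A x, (1 / p : ℝ) + 1 := by
    intro x hx
    obtain ⟨hx0, hxle⟩ := hX x hx
    rw [← Finset.sum_filter_add_sum_filter_not _ (fun p => p ≤ M ^ 2)]
    apply add_le_add
    · apply Finset.sum_le_sum_of_subset_of_nonneg
      · intro p hp
        simp only [Finset.mem_filter, Nat.mem_primeFactors] at hp
        simp only [hA, hP, Finset.mem_filter, Nat.mem_primesLE]
        tauto
      · intros; positivity
    · have hcard : (h x).primeFactors.card ≤ M ^ 2 := by
        have : 2 ^ (h x).primeFactors.card ≤ 2 ^ (M ^ 2) := by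
          calc _ ≤ ∏ p ∈ (h x).primeFactors, p := Finset.pow_card_le_prod _ _ _
                fun p hp => (Nat.prime_of_mem_primeFactors hp).two_le
            _ ≤ h x := Nat.le_of_dvd (Nat.pos_of_ne_zero hx0) (Nat.prod_primeFactors_dvd _)
            _ ≤ _ := hxle
        exact (Nat.pow_le_pow_iff_right (by norm_num)).1 this
      calc ∑ p ∈ ((h x).primeFactors.filter (fun p => p ≠ 2)).filter (fun p => ¬ p ≤ M ^ 2),
            (1 / p : ℝ)
        _ ≤ ∑ p ∈ ((h x).primeFactors.filter (fun p => p ≠ 2)).filter (fun p => ¬ p ≤ M ^ 2),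
            (1 / M ^ 2 : ℝ) := by
          apply Finset.sum_le_sum
          intro p hp
          have : M ^ 2 < p := not_le.1 (Finset.mem_filter.1 hp).2
          have : (M : ℝ) ^ 2 ≤ p := by exact_mod_cast this.le
          gcongr
        _ ≤ (M ^ 2 : ℕ) * (1 / M ^ 2 : ℝ) := by
          rw [Finset.sum_const, nsmul_eq_mul]
          gcongr
          exact (Finset.card_le_card ((Finset.filter_subset _ _).trans
            (Finset.filter_subset _ _))).trans hcard
        _ = 1 := by push_cast; field_simp
  set s : α → ℕ → ℝ := fun x k => ∑ p ∈ (A x).filter (fun p => ordTwo p = k), (1 / p : ℝ) with hs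
  have hs0 : ∀ x k, 0 ≤ s x k := fun x k => Finset.sum_nonneg fun p _ => by positivity
  have hord : ∀ p ∈ P, 1 ≤ ordTwo p ∧ ordTwo p < M ^ 2 := by
    intro p hp
    have h1 := ordTwo_pos (hPp p hp).1 (hPp p hp).2
    have h2 := ordTwo_le (hPp p hp).1 (hPp p hp).2
    have h3 := hPle p hp
    have h4 := (hPp p hp).1.two_le
    exact ⟨h1, by omega⟩
  have hpartial : ∀ x k, ∑ j ∈ range (k + 1), s x j =
      ∑ p ∈ (A x).filter (fun p => ordTwo p ≤ k), (1 / p : ℝ) := by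
    intro x k
    rw [← Finset.sum_fiberwise_of_maps_to (s := (A x).filter (fun p => ordTwo p ≤ k))
      (t := range (k + 1)) (g := ordTwo) (fun p hp => by
        simpa [Nat.lt_succ_iff] using (Finset.mem_filter.1 hp).2)]
    apply Finset.sum_congr rfl
    intro j hj
    rw [hs, Finset.filter_filter]
    apply Finset.sum_congr _ fun _ _ => rfl
    ext p
    simp only [Finset.mem_filter]
    have := Finset.mem_range.1 hj
    constructor
    · rintro ⟨h1, h2⟩; exact ⟨h1, by omega, h2⟩
    · rintro ⟨h1, h2, h3⟩; exact ⟨h1, h3⟩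
  have htotal : ∀ x, ∑ p ∈ A x, (1 / p : ℝ) = ∑ j ∈ range (M ^ 2 + 1), s x j := by
    intro x
    rw [hpartial]
    apply Finset.sum_congr _ fun _ _ => rfl
    rw [Finset.filter_true_of_mem]
    intro p hp
    exact (hord p (Finset.mem_filter.1 hp).1).2.le
  have hsavg : ∀ k, 1 ≤ k → ∑ x ∈ X, s x k ≤
      C₀ * B * (k : ℝ) ^ (-(1 / 4) : ℝ) * ((2 + Real.log k) / k) := by
    intro k hk
    have e1 : ∑ x ∈ X, s x k = ∑ p ∈ P.filter (fun p => ordTwo p = k),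
        ((X.filter (fun x => p ∣ h x)).card : ℝ) * (1 / p : ℝ) := by
      simp only [hs, hA, Finset.filter_filter]
      simp_rw [Finset.sum_filter]
      rw [Finset.sum_comm]
      apply Finset.sum_congr rfl
      intro p hp
      by_cases hpk : ordTwo p = k
      · simp only [hpk, and_true, if_true]
        rw [← Finset.sum_filter, Finset.sum_const, nsmul_eq_mul]
      · simp [hpk]
    rw [e1]
    calc _ ≤ ∑ p ∈ P.filter (fun p => ordTwo p = k),
          C₀ * B * (k : ℝ) ^ (-(1 / 4) : ℝ) * (1 / p : ℝ) := by
          apply Finset.sum_le_sum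
          intro p hp
          obtain ⟨hpP, hpk⟩ := Finset.mem_filter.1 hp
          have := hdiv p (hPp p hpP).1 (hPp p hpP).2 (hPle p hpP)
          rw [hpk] at this
          gcongr
      _ = C₀ * B * (k : ℝ) ^ (-(1 / 4) : ℝ) * ∑ p ∈ P.filter (fun p => ordTwo p = k), (1 / p : ℝ) :=
          by rw [Finset.mul_sum]
      _ ≤ _ := by
          gcongr
          exact sum_inv_ordTwo_eq_le P hPp k hk
  have hterm : ∀ k, ∑ x ∈ X, 4 * s x k * Real.exp (4 * ∑ j ∈ range (k + 1), s x j) ≤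
      72 * C₁ * C₀ * B * (k : ℝ) ^ (-(17 / 16) : ℝ) := by
    intro k
    rcases Nat.eq_zero_or_pos k with rfl | hk
    · have : ∀ x, s x 0 = 0 := by
        intro x
        simp only [hs]
        rw [Finset.filter_false_of_mem, Finset.sum_empty]
        intro p hp
        have := (hord p (Finset.mem_filter.1 hp).1).1
        omega
      simp only [this, mul_zero, zero_mul, Finset.sum_const_zero]
      positivity
    · have hk1 : (1 : ℝ) ≤ k := by exact_mod_cast hk
      have hk0 : (0 : ℝ) < k := by linarith
      have hlog : 2 + Real.log k ≤ 18 * (k : ℝ) ^ (1 / 16 : ℝ) := by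
        have h1 := Real.log_le_rpow_div hk0.le (show (0 : ℝ) < 1 / 16 by norm_num)
        have h2 := Real.one_le_rpow hk1 (show (0 : ℝ) ≤ 1 / 16 by norm_num)
        have h3 : (k : ℝ) ^ (1 / 16 : ℝ) / (1 / 16) = 16 * (k : ℝ) ^ (1 / 16 : ℝ) := by ring
        linarith
      calc _ ≤ ∑ x ∈ X, 4 * s x k * (C₁ * (k : ℝ) ^ (1 / 8 : ℝ)) := by
            apply Finset.sum_le_sum
            intro x hx
            have := hs0 x k
            have h2 := hexp (A x) (hAp x) k hk
            rw [hpartial]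
            gcongr
        _ = 4 * (C₁ * (k : ℝ) ^ (1 / 8 : ℝ)) * ∑ x ∈ X, s x k := by
            rw [Finset.mul_sum]
            exact Finset.sum_congr rfl fun x _ => by ring
        _ ≤ 4 * (C₁ * (k : ℝ) ^ (1 / 8 : ℝ)) * (C₀ * B * (k : ℝ) ^ (-(1 / 4) : ℝ) *
              (18 * (k : ℝ) ^ (1 / 16 : ℝ) / k)) := by
            refine mul_le_mul_of_nonneg_left ((hsavg k hk).trans ?_) (by positivity)
            gcongr
        _ = 72 * C₁ * C₀ * B * ((k : ℝ) ^ (1 / 8 : ℝ) * (k : ℝ) ^ (-(1 / 4) : ℝ) *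
              (k : ℝ) ^ (1 / 16 : ℝ) * (k : ℝ) ^ (-1 : ℝ)) := by
            rw [Real.rpow_neg_one]; ring
        _ = _ := by
            rw [← Real.rpow_add hk0, ← Real.rpow_add hk0, ← Real.rpow_add hk0]
            norm_num
  calc _ ≤ ∑ x ∈ X, Real.exp 6 * (1 + ∑ k ∈ range (M ^ 2 + 1),
        4 * s x k * Real.exp (4 * ∑ j ∈ range (k + 1), s x j)) := by
        apply Finset.sum_le_sum
        intro x hx
        calc _ ≤ Real.exp (6 + 4 * ∑ j ∈ range (M ^ 2 + 1), s x j) := by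
              apply Real.exp_le_exp.2
              rw [← htotal]
              linarith [hbig x hx]
          _ = Real.exp 6 * Real.exp (4 * ∑ j ∈ range (M ^ 2 + 1), s x j) := Real.exp_add _ _
          _ ≤ _ := by
              gcongr
              exact exp_sum_le_telescope _ _
    _ = Real.exp 6 * (X.card + ∑ k ∈ range (M ^ 2 + 1), ∑ x ∈ X,
        4 * s x k * Real.exp (4 * ∑ j ∈ range (k + 1), s x j)) := by
        rw [← Finset.mul_sum, Finset.sum_add_distrib, Finset.sum_comm]
        simp
    _ ≤ Real.exp 6 * (B + ∑ k ∈ range (M ^ 2 + 1), 72 * C₁ * C₀ * B * (k : ℝ) ^ (-(17 / 16) : ℝ)) := by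
        gcongr with k hk
        exact hterm k
    _ ≤ Real.exp 6 * (B + 72 * C₁ * C₀ * B * T) := by
        rw [← Finset.mul_sum]
        gcongr
        exact hsum.sum_le_tsum _ (fun n _ => by positivity)
    _ = _ := by ring

/-! ### The two moments -/

/-- Cauchy–Schwarz for the number of representations `n = p + v q`. -/
theorem sq_card_le_card_image_mul (P : Finset ℕ) (Q : Finset (ℕ × ℕ)) (v : ℕ × ℕ → ℕ) :
    (P.card * Q.card) ^ 2 ≤ ((P ×ˢ Q).image (fun z => z.1 + v z.2)).card *
      ∑ q ∈ Q, ∑ q' ∈ Q, (P.filter (fun p => ∃ p' ∈ P, p + v q = p' + v q')).card := by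
  set f : ℕ × (ℕ × ℕ) → ℕ := fun z => z.1 + v z.2 with hf
  set r : ℕ → ℕ := fun n => ((P ×ˢ Q).filter (fun z => f z = n)).card with hr
  have h1 : P.card * Q.card = ∑ n ∈ (P ×ˢ Q).image f, r n := by
    rw [← Finset.card_product]
    exact Finset.card_eq_sum_card_image f _
  have h2 : ∑ n ∈ (P ×ˢ Q).image f, r n ^ 2 = ∑ z ∈ P ×ˢ Q, r (f z) := by
    rw [Finset.sum_comp r f]
    apply Finset.sum_congr rfl
    intro n _
    simp [hr, sq]
  have h3 : ∀ z, r (f z) ≤ ∑ q' ∈ Q, if ∃ p' ∈ P, f z = p' + v q' then 1 else 0 := by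
    intro z
    rw [← Finset.card_filter]
    apply Finset.card_le_card_of_injOn (fun z' => z'.2)
    · intro z' hz'
      simp only [hf, Finset.coe_filter, Finset.mem_product, Set.mem_ofPred_eq] at hz' ⊢
      exact ⟨hz'.1.2, z'.1, hz'.1.1, hz'.2.symm⟩
    · intro a ha b hb hab
      simp only [hf, Finset.coe_filter, Set.mem_ofPred_eq] at ha hb hab
      have h4 : a.1 + v a.2 = b.1 + v b.2 := ha.2.trans hb.2.symm
      rw [hab] at h4
      exact Prod.ext (by omega) hab
  calc (P.card * Q.card) ^ 2 = (∑ n ∈ (P ×ˢ Q).image f, r n) ^ 2 := by rw [h1]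
    _ ≤ ((P ×ˢ Q).image f).card * ∑ n ∈ (P ×ˢ Q).image f, r n ^ 2 := sq_sum_le_card_mul_sum_sq
    _ ≤ _ := by
      gcongr
      rw [h2]
      refine (Finset.sum_le_sum fun z _ => h3 z).trans (le_of_eq ?_)
      rw [Finset.sum_product_right]
      apply Finset.sum_congr rfl
      intro q _
      rw [Finset.sum_comm]
      apply Finset.sum_congr rfl
      intro q' _
      rw [Finset.card_filter]

/-- The number `2 ^ a² + 2 ^ b²` attached to the pair `(a, b)`. -/
def twoPowSum (q : ℕ × ℕ) : ℕ := 2 ^ (q.1 ^ 2) + 2 ^ (q.2 ^ 2)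

theorem fst_le_of_twoPowSum_eq {q q' : ℕ × ℕ} (hq : q.2 < q.1)
    (h : twoPowSum q = twoPowSum q') : q'.1 ≤ q.1 := by
  by_contra hcon
  have h1 : 2 ^ (q.2 ^ 2) < 2 ^ (q.1 ^ 2) :=
    Nat.pow_lt_pow_right (by norm_num) (Nat.pow_lt_pow_left hq (by norm_num))
  have h2 : 2 ^ (q.1 ^ 2 + 1) ≤ 2 ^ (q'.1 ^ 2) := by
    apply Nat.pow_le_pow_right (by norm_num)
    exact Nat.pow_lt_pow_left (by omega) (by norm_num)
  rw [pow_succ] at h2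
  have h3 : 0 < 2 ^ (q'.2 ^ 2) := by positivity
  simp only [twoPowSum] at h
  omega

theorem twoPowSum_injective {q q' : ℕ × ℕ} (hq : q.2 < q.1) (hq' : q'.2 < q'.1)
    (h : twoPowSum q = twoPowSum q') : q = q' := by
  have h1 : q.1 = q'.1 := le_antisymm (fst_le_of_twoPowSum_eq hq' h.symm)
    (fst_le_of_twoPowSum_eq hq h)
  simp only [twoPowSum, h1, Nat.add_left_cancel_iff] at h
  have h2 := Nat.pow_right_injective (le_refl 2) h
  exact Prod.ext h1 (Nat.pow_left_injective (by norm_num : 2 ≠ 0) h2)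

theorem two_mul_twoPowSum_le {M : ℕ} (hM : 2 ≤ M) {q : ℕ × ℕ} (h1 : q.1 < M) (h2 : q.2 < M) :
    2 * twoPowSum q ≤ 2 ^ (M ^ 2) := by
  obtain ⟨m, rfl⟩ : ∃ m, M = m + 2 := ⟨M - 2, by omega⟩
  have key : ∀ a, a < m + 2 → 2 ^ (a ^ 2) ≤ 2 ^ ((m + 1) ^ 2) := fun a ha =>
    Nat.pow_le_pow_right (by norm_num) (Nat.pow_le_pow_left (by omega) 2)
  have k1 := key _ h1
  have k2 := key _ h2
  have h3 : 2 ^ ((m + 1) ^ 2 + 2) ≤ 2 ^ ((m + 2) ^ 2) :=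
    Nat.pow_le_pow_right (by norm_num) (by nlinarith)
  rw [pow_add] at h3
  simp only [twoPowSum]
  omega

/-- The index set of pairs `(a, b)` with `b < M / 2 ≤ a < M`. -/
def pairs (M : ℕ) : Finset (ℕ × ℕ) := Ico (M / 2) M ×ˢ range (M / 2)

theorem mem_pairs {M : ℕ} {q : ℕ × ℕ} (hq : q ∈ pairs M) : q.1 < M ∧ q.2 < M ∧ q.2 < q.1 := by
  simp only [pairs, Finset.mem_product, Finset.mem_Ico, Finset.mem_range] at hq
  omega

theorem card_pairs_le (M : ℕ) : (pairs M).card ≤ M ^ 2 := by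
  simp only [pairs, Finset.card_product, Nat.card_Ico, Finset.card_range, sq]
  exact Nat.mul_le_mul (Nat.sub_le _ _) (Nat.div_le_self _ _)

theorem sq_le_card_pairs {M : ℕ} (hM : 2 ≤ M) : M ^ 2 ≤ 16 * (pairs M).card := by
  simp only [pairs, Finset.card_product, Nat.card_Ico, Finset.card_range, sq]
  have h1 : M ≤ 4 * (M - M / 2) := by omega
  have h2 : M ≤ 4 * (M / 2) := by omega
  calc M * M ≤ (4 * (M - M / 2)) * (4 * (M / 2)) := Nat.mul_le_mul h1 h2
    _ = _ := by ring

/-- The absolute difference of the two values of `twoPowSum`, written with truncated subtraction. -/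
def gap (z : (ℕ × ℕ) × (ℕ × ℕ)) : ℕ :=
  (twoPowSum z.1 - twoPowSum z.2) + (twoPowSum z.2 - twoPowSum z.1)

/-- For given `b, c, d` the congruence `2 ^ a² + 2 ^ b² ≡ 2 ^ c² + 2 ^ d²` modulo `p` fixes
`2 ^ a²`. -/
theorem card_gap_dvd_le (M p : ℕ) (hp : p.Prime) (hp2 : p ≠ 2) (hpM : p ≤ M ^ 2)
    (X : Finset ((ℕ × ℕ) × (ℕ × ℕ))) (hX : X ⊆ pairs M ×ˢ pairs M) :
    ((X.filter (fun z => p ∣ gap z)).card : ℝ) ≤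
      (64 ^ 4 * 4) * (M : ℝ) ^ 4 * (ordTwo p : ℝ) ^ (-(1 / 4) : ℝ) := by
  set R := (range M ×ˢ range M) ×ˢ range M with hR
  set cnt : (ℕ × ℕ) × ℕ → Finset ℕ := fun t => (range M).filter (fun m => (2 : ZMod p) ^ (m ^ 2) =
    2 ^ (t.1.1 ^ 2) + 2 ^ (t.1.2 ^ 2) - 2 ^ (t.2 ^ 2)) with hcnt
  have hle : (X.filter (fun z => p ∣ gap z)).card ≤ ∑ t ∈ R, (cnt t).card := by
    rw [← Finset.card_sigma]
    apply Finset.card_le_card_of_injOn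
      (fun z => (⟨(z.2, z.1.2), z.1.1⟩ : (_ : (ℕ × ℕ) × ℕ) × ℕ))
    · intro z hz
      simp only [Finset.coe_filter, Set.mem_ofPred_eq] at hz
      obtain ⟨hzX, hdvd⟩ := hz
      have hz' := Finset.mem_product.1 (hX hzX)
      have m1 := mem_pairs hz'.1
      have m2 := mem_pairs hz'.2
      have hcast : ((twoPowSum z.1 : ℕ) : ZMod p) = (twoPowSum z.2 : ℕ) := by
        rcases le_total (twoPowSum z.1) (twoPowSum z.2) with hle | hle
        · rw [gap, Nat.sub_eq_zero_of_le hle, zero_add] at hdvd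
          exact (ZMod.natCast_eq_natCast_iff _ _ _).2 ((Nat.modEq_iff_dvd' hle).2 hdvd)
        · rw [gap, Nat.sub_eq_zero_of_le hle, add_zero] at hdvd
          exact ((ZMod.natCast_eq_natCast_iff _ _ _).2 ((Nat.modEq_iff_dvd' hle).2 hdvd)).symm
      simp only [twoPowSum, Nat.cast_add, Nat.cast_pow, Nat.cast_ofNat] at hcast
      simp only [hR, hcnt, Finset.coe_sigma, Set.mem_sigma_iff, Finset.mem_coe, Finset.mem_product,
        Finset.mem_range, Finset.mem_filter]
      refine ⟨⟨⟨m2.1, m2.2.1⟩, m1.2.1⟩, m1.1, ?_⟩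
      rw [← hcast]; ring
    · rintro ⟨⟨a, b⟩, ⟨c, d⟩⟩ _ ⟨⟨a', b'⟩, ⟨c', d'⟩⟩ _ hz
      simp only [Sigma.mk.injEq, Prod.mk.injEq, heq_eq_eq] at hz
      simp only [Prod.mk.injEq]
      tauto
  calc ((X.filter (fun z => p ∣ gap z)).card : ℝ) ≤ ∑ t ∈ R, ((cnt t).card : ℝ) := by
        exact_mod_cast hle
    _ ≤ ∑ t ∈ R, (64 ^ 4 * 4 * M * (ordTwo p : ℝ) ^ (-(1 / 4) : ℝ)) :=
        Finset.sum_le_sum fun t _ => card_two_pow_sq_eq_le M p hp hp2 hpM _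
    _ = _ := by
        rw [Finset.sum_const, nsmul_eq_mul, hR]
        simp only [Finset.card_product, Finset.card_range, Nat.cast_mul]
        ring

/-- Pairs of primes in `P` whose difference is prescribed by two shifts are prime pairs with difference
`gap`, whichever of the two shifts is larger. -/
theorem card_shift_le (x : ℕ) (P : Finset ℕ) (hP : ∀ p ∈ P, p.Prime ∧ p ≤ x) (q q' : ℕ × ℕ) :
    (P.filter (fun p => ∃ p' ∈ P, p + twoPowSum q = p' + twoPowSum q')).card ≤
      ((range (x + 1)).filter (fun p => p.Prime ∧ (p + gap (q, q')).Prime)).card := by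
  rcases le_total (twoPowSum q) (twoPowSum q') with hle | hle
  · have hg : gap (q, q') = twoPowSum q' - twoPowSum q := by
      simp [gap, Nat.sub_eq_zero_of_le hle]
    rw [hg]
    apply Finset.card_le_card_of_injOn (fun p => p - (twoPowSum q' - twoPowSum q))
    · intro p hp
      simp only [Finset.coe_filter, Set.mem_ofPred_eq] at hp
      obtain ⟨hpP, p', hp', h⟩ := hp
      have e1 : p - (twoPowSum q' - twoPowSum q) = p' := by omega
      have e2 : p' + (twoPowSum q' - twoPowSum q) = p := by omega
      simp only [Finset.coe_filter, Set.mem_ofPred_eq, Finset.mem_range, e1, e2]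
      exact ⟨Nat.lt_succ_of_le (hP p' hp').2, (hP p' hp').1, (hP p hpP).1⟩
    · intro a ha b hb hab
      simp only [Finset.coe_filter, Set.mem_ofPred_eq] at ha hb hab
      obtain ⟨_, a', _, h1⟩ := ha
      obtain ⟨_, b', _, h2⟩ := hb
      omega
  · have hg : gap (q, q') = twoPowSum q - twoPowSum q' := by
      simp [gap, Nat.sub_eq_zero_of_le hle]
    rw [hg]
    apply Finset.card_le_card
    intro p hp
    simp only [Finset.mem_filter] at hp
    obtain ⟨hpP, p', hp', h⟩ := hp
    have e2 : p + (twoPowSum q - twoPowSum q') = p' := by omega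
    simp only [Finset.mem_filter, Finset.mem_range, e2]
    exact ⟨Nat.lt_succ_of_le (hP p hpP).2, (hP p hpP).1, (hP p' hp').1⟩

theorem gap_le {M : ℕ} (hM : 2 ≤ M) {q q' : ℕ × ℕ} (hq : q ∈ pairs M) (hq' : q' ∈ pairs M) :
    gap (q, q') ≤ 2 ^ (M ^ 2) := by
  have h1 := two_mul_twoPowSum_le hM (mem_pairs hq).1 (mem_pairs hq).2.1
  have h2 := two_mul_twoPowSum_le hM (mem_pairs hq').1 (mem_pairs hq').2.1
  simp only [gap]
  omega

theorem eq_of_gap_eq_zero {M : ℕ} {q q' : ℕ × ℕ} (hq : q ∈ pairs M) (hq' : q' ∈ pairs M)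
    (h : gap (q, q') = 0) : q = q' := by
  apply twoPowSum_injective (mem_pairs hq).2.2 (mem_pairs hq').2.2
  simp only [gap] at h
  omega

theorem primeCounting_mul_log_le (x : ℕ) (hx : 2 ≤ x) :
    (Nat.primeCounting x : ℝ) * Nat.log 2 x ≤ 12 * x := by
  set l := Nat.log 2 x with hl
  have hx0 : (0 : ℝ) < x := by positivity
  have h2l : (2 : ℝ) ^ l ≤ x := by exact_mod_cast Nat.pow_log_le_self 2 (by omega)
  have hl1 : 1 ≤ l := Nat.log_pos (by norm_num) hx
  have hl0 : (0 : ℝ) < l := by exact_mod_cast hl1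
  have hlog2 : 0 < Real.log 2 := Real.log_pos (by norm_num)
  have hlogx : l * Real.log 2 ≤ Real.log x := by
    rw [← Real.log_pow]
    exact Real.log_le_log (by positivity) h2l
  have h1 := Chebyshev.pi_le_log4_mul_div (x := (x : ℝ)) (by exact_mod_cast hx)
  rw [Nat.floor_natCast, Real.log_sqrt hx0.le] at h1
  have hlog4 : Real.log 4 = 2 * Real.log 2 := by
    rw [show (4 : ℝ) = 2 ^ 2 by norm_num, Real.log_pow]; norm_num
  rw [hlog4] at h1
  have h2 : 2 * Real.log 2 * x / (Real.log x / 2) ≤ 4 * x / l := by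
    rw [div_le_div_iff₀ (by linarith [mul_pos hl0 hlog2]) hl0]
    nlinarith
  have h3 : (l : ℝ) ≤ 8 * √x := by
    have h4 : l ^ 2 ≤ 64 * 2 ^ l := by
      calc l ^ 2 ≤ (l + 1) ^ 4 := (Nat.pow_le_pow_left (Nat.le_succ l) 2).trans
            (Nat.pow_le_pow_right (by omega) (by norm_num))
        _ ≤ _ := succ_pow_four_le l
    have h5 : (l : ℝ) ^ 2 ≤ 64 * 2 ^ l := by exact_mod_cast h4
    apply le_of_sq_le_sq _ (by positivity)
    rw [mul_pow, Real.sq_sqrt hx0.le]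
    linarith
  calc (Nat.primeCounting x : ℝ) * l ≤ (4 * x / l + √x) * l := by gcongr; linarith
    _ = 4 * x + √x * l := by field_simp
    _ ≤ 4 * x + √x * (8 * √x) := by gcongr
    _ = 12 * x := by
        have := Real.mul_self_sqrt hx0.le
        linarith

theorem le_primeCounting_half_mul_log (x : ℕ) (hx : 12 ≤ x) :
    (x : ℝ) ≤ 8 * Nat.primeCounting (x / 2) * (Nat.log 2 x + 1) := by
  set l := Nat.log 2 x with hl
  set n := x / 2 with hn
  have hn6 : 6 ≤ n := by omega
  have hn0 : (6 : ℝ) ≤ n := by exact_mod_cast hn6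
  have hlog2 : 0 < Real.log 2 := Real.log_pos (by norm_num)
  have hlogn : 0 < Real.log n := Real.log_pos (by linarith)
  have h1 := Chebyshev.pi_ge n
  have h2 : 4 * Real.log (n + 1) ≤ (n + 6) * Real.log 2 := by
    have h3 : ((n : ℝ) + 1) ^ 4 ≤ 2 ^ (n + 6) := by
      have := succ_pow_four_le n
      calc ((n : ℝ) + 1) ^ 4 ≤ 64 * 2 ^ n := by exact_mod_cast this
        _ = _ := by ring
    have h4 := Real.log_le_log (by positivity) h3
    rw [Real.log_pow, Real.log_pow] at h4
    push_cast at h4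
    exact h4
  have h3 : Real.log n ≤ (l + 1) * Real.log 2 := by
    have : n ≤ 2 ^ (l + 1) := (Nat.div_le_self x 2).trans
      (Nat.lt_pow_succ_log_self (by norm_num) x).le
    calc Real.log n ≤ Real.log ((2 : ℝ) ^ (l + 1)) :=
          Real.log_le_log (by linarith) (by exact_mod_cast this)
      _ = _ := by rw [Real.log_pow]; push_cast; ring
  rw [div_le_iff₀ hlogn] at h1
  have h4 : (n : ℝ) * Real.log 2 / 2 ≤ Nat.primeCounting n * ((l + 1) * Real.log 2) := by
    calc (n : ℝ) * Real.log 2 / 2 ≤ n * Real.log 2 - Real.log (n + 1) := by nlinarith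
      _ ≤ _ := h1
      _ ≤ _ := by gcongr
  have h5 : (n : ℝ) / 2 ≤ Nat.primeCounting n * (l + 1) := by
    apply le_of_mul_le_mul_right _ hlog2
    linarith
  have h6 : (x : ℝ) ≤ 4 * n := by
    have : x ≤ 4 * n := by omega
    exact_mod_cast this
  linarith

/-- The second moment of the number of representations is `O(x)`. The sieve is applied with
parameter `w = 2 ^ (l / 16)`, where `l = ⌊log₂ x⌋`. -/
theorem exists_second_moment_le : ∃ K : ℝ, 0 < K ∧ ∀ x : ℕ, 2 ^ 16 ≤ x →
    ∀ P : Finset ℕ, P = Nat.primesLE (x / 2) → ∀ M : ℕ, M = Nat.sqrt (Nat.log 2 x) →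
    ∑ q ∈ pairs M, ∑ q' ∈ pairs M,
      ((P.filter (fun p => ∃ p' ∈ P, p + twoPowSum q = p' + twoPowSum q')).card : ℝ) ≤ K * x := by
  obtain ⟨C, hC, havg⟩ := exists_sum_exp_le (64 ^ 4 * 4) (by norm_num)
  refine ⟨12 + (2 * 64 ^ 2 * C + 24), by positivity, fun x hx P hP M hM => ?_⟩
  set l := Nat.log 2 x with hl
  have hx0 : x ≠ 0 := by rintro rfl; norm_num at hx
  have hx1 : (1 : ℝ) ≤ x := by exact_mod_cast Nat.one_le_iff_ne_zero.2 hx0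
  have h2l : (2 : ℝ) ^ l ≤ x := by exact_mod_cast Nat.pow_log_le_self 2 hx0
  have hl16 : 16 ≤ l := (Nat.le_log_iff_pow_le (by norm_num) hx0).2 hx
  have hM4 : 4 ≤ M := by
    rw [hM]; exact Nat.le_sqrt.2 (by omega)
  have hMl : M ^ 2 ≤ l := by rw [hM, sq]; exact Nat.sqrt_le l
  have hM0 : (0 : ℝ) < M := by positivity
  have hPp : ∀ p ∈ P, p.Prime ∧ p ≤ x := by
    intro p hp
    rw [hP, Nat.mem_primesLE] at hp
    exact ⟨hp.2, hp.1.trans (Nat.div_le_self _ _)⟩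
  set N : (ℕ × ℕ) × (ℕ × ℕ) → ℝ := fun z =>
    ((P.filter (fun p => ∃ p' ∈ P, p + twoPowSum z.1 = p' + twoPowSum z.2)).card : ℝ) with hN
  rw [← Finset.sum_product (f := N), ← Finset.sum_filter_add_sum_filter_not _ (fun z => gap z = 0),
    add_mul]
  apply add_le_add
  · have hPc : (P.card : ℝ) ≤ Nat.primeCounting x := by
      rw [hP, Nat.primesLE_card_eq_primeCounting]
      exact_mod_cast Nat.monotone_primeCounting (Nat.div_le_self x 2)
    have hcard : ((pairs M ×ˢ pairs M).filter (fun z => gap z = 0)).card ≤ (pairs M).card := by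
      apply Finset.card_le_card_of_injOn (fun z => z.1)
      · intro z hz
        simp only [Finset.coe_filter, Finset.mem_product, Set.mem_ofPred_eq] at hz
        exact hz.1.1
      · intro a ha b hb hab
        simp only [Finset.coe_filter, Finset.mem_product, Set.mem_ofPred_eq] at ha hb hab
        have e1 := eq_of_gap_eq_zero ha.1.1 ha.1.2 ha.2
        have e2 := eq_of_gap_eq_zero hb.1.1 hb.1.2 hb.2
        exact Prod.ext hab (by rw [← e1, ← e2, hab])
    have hcl : ((((pairs M ×ˢ pairs M).filter (fun z => gap z = 0)).card : ℕ) : ℝ) ≤ l := by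
      exact_mod_cast (hcard.trans (card_pairs_le M)).trans hMl
    calc _ ≤ ∑ z ∈ (pairs M ×ˢ pairs M).filter (fun z => gap z = 0),
          (Nat.primeCounting x : ℝ) := by
          apply Finset.sum_le_sum
          intro z _
          refine le_trans ?_ hPc
          exact Nat.cast_le.2 (Finset.card_le_card (Finset.filter_subset _ _))
      _ ≤ l * Nat.primeCounting x := by
          rw [Finset.sum_const, nsmul_eq_mul]
          gcongr
      _ ≤ 12 * x := by
          rw [mul_comm]
          exact primeCounting_mul_log_le x (le_trans (by norm_num) hx)
  · set X := (pairs M ×ˢ pairs M).filter (fun z => ¬ gap z = 0) with hX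
    have hXc : (X.card : ℝ) ≤ (M : ℝ) ^ 4 := by
      have : X.card ≤ M ^ 2 * M ^ 2 := (Finset.card_le_card (Finset.filter_subset _ _)).trans (by
        rw [Finset.card_product]; exact Nat.mul_le_mul (card_pairs_le M) (card_pairs_le M))
      calc (X.card : ℝ) ≤ ((M ^ 2 * M ^ 2 : ℕ) : ℝ) := by exact_mod_cast this
        _ = _ := by push_cast; ring
    set w := 2 ^ (l / 16) with hw
    have hw2 : 2 ≤ w := by
      calc 2 = 2 ^ 1 := rfl
        _ ≤ _ := Nat.pow_le_pow_right (by norm_num) (by omega)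
    have hlogw : (M : ℝ) ^ 2 / 64 ≤ Real.log w := by
      have e1 : M ^ 2 ≤ 32 * (l / 16) := by omega
      have e2 : (M : ℝ) ^ 2 ≤ 32 * (l / 16 : ℕ) := by exact_mod_cast e1
      have e3 : (1 / 2 : ℝ) ≤ Real.log 2 := by linarith [Real.log_two_gt_d9]
      rw [hw]
      push_cast
      rw [Real.log_pow]
      have e4 : (0 : ℝ) ≤ (l / 16 : ℕ) := by positivity
      nlinarith
    have hlogw2 : (M : ℝ) ^ 4 ≤ 64 ^ 2 * Real.log w ^ 2 := by
      have := pow_le_pow_left₀ (by positivity) hlogw 2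
      rw [div_pow] at this
      nlinarith
    have hlogw0 : 0 < Real.log w := lt_of_lt_of_le (by positivity) hlogw
    have herr : (M : ℝ) ^ 4 * (w : ℝ) ^ 8 ≤ 8 * x := by
      have e1 : (M : ℝ) ^ 2 ≤ l := by exact_mod_cast hMl
      have e2 : (l : ℝ) ^ 4 ≤ 64 * 2 ^ l := by
        have : l ^ 4 ≤ 64 * 2 ^ l :=
          (Nat.pow_le_pow_left (Nat.le_succ l) 4).trans (succ_pow_four_le l)
        exact_mod_cast this
      have e3 : ((w : ℝ) ^ 8) ^ 2 ≤ 2 ^ l := by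
        rw [hw]
        push_cast
        rw [← pow_mul, ← pow_mul]
        exact pow_le_pow_right₀ (by norm_num) (by omega)
      have e4 : ((M : ℝ) ^ 4) ^ 2 ≤ 64 * 2 ^ l := by
        calc ((M : ℝ) ^ 4) ^ 2 = ((M : ℝ) ^ 2) ^ 4 := by ring
          _ ≤ (l : ℝ) ^ 4 := by gcongr
          _ ≤ _ := e2
      have e5 : ((M : ℝ) ^ 4 * (w : ℝ) ^ 8) ^ 2 ≤ (8 * 2 ^ l) ^ 2 := by
        calc _ = ((M : ℝ) ^ 4) ^ 2 * ((w : ℝ) ^ 8) ^ 2 := by ring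
          _ ≤ (64 * 2 ^ l) * 2 ^ l := by gcongr
          _ = _ := by ring
      have e6 := le_of_sq_le_sq e5 (by positivity)
      linarith
    have hS := havg ((ℕ × ℕ) × (ℕ × ℕ)) X gap M ((M : ℝ) ^ 4) (by omega)
      (fun z hz => by
        simp only [hX, Finset.mem_filter, Finset.mem_product] at hz
        exact ⟨hz.2, gap_le (by omega) hz.1.1 hz.1.2⟩) hXc
      (fun p hp hp2 hpM => card_gap_dvd_le M p hp hp2 hpM X (Finset.filter_subset _ _))
    calc _ ≤ ∑ z ∈ X, (((x + 1 : ℕ) : ℝ) / Real.log w ^ 2 * Real.exp (2 + 4 *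
            ∑ p ∈ (gap z).primeFactors.filter (fun p => p ≠ 2), (1 / p : ℝ)) + 3 * (w : ℝ) ^ 8) := by
          apply Finset.sum_le_sum
          intro z hz
          have hz0 : gap z ≠ 0 := (Finset.mem_filter.1 hz).2
          calc N z ≤ (((range (x + 1)).filter
                (fun p => p.Prime ∧ (p + gap z).Prime)).card : ℝ) := by
                exact Nat.cast_le.2 (card_shift_le x P hPp z.1 z.2)
            _ ≤ _ := card_prime_pairs_le (x + 1) (gap z) w hz0 hw2
            _ = _ := by ring
      _ = ((x + 1 : ℕ) : ℝ) / Real.log w ^ 2 * ∑ z ∈ X, Real.exp (2 + 4 *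
            ∑ p ∈ (gap z).primeFactors.filter (fun p => p ≠ 2), (1 / p : ℝ)) +
            X.card * (3 * (w : ℝ) ^ 8) := by
          rw [Finset.sum_add_distrib, ← Finset.mul_sum, Finset.sum_const, nsmul_eq_mul]
      _ ≤ (2 * x) / Real.log w ^ 2 * (C * (64 ^ 2 * Real.log w ^ 2)) +
            (M : ℝ) ^ 4 * (3 * (w : ℝ) ^ 8) := by
          gcongr
          · push_cast; linarith
          · exact hS.trans (by gcongr)
      _ = 2 * 64 ^ 2 * C * x + 3 * ((M : ℝ) ^ 4 * (w : ℝ) ^ 8) := by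
          field_simp
      _ ≤ 2 * 64 ^ 2 * C * x + 3 * (8 * x) := by gcongr
      _ = _ := by ring

end Romanoff

/-- The set of natural numbers representable as `p + 2^(m₁²) + 2^(m₂²)` with `p` prime
and `m₁, m₂` natural numbers has positive lower asymptotic density: there are `c > 0`
and `x₀` such that for all `x ≥ x₀`, the number of `n ≤ x` of this form is at least `c·x`. -/
theorem romanoff_type_positive_lower_density :
    ∃ c : ℝ, 0 < c ∧ ∃ x₀ : ℕ, ∀ x : ℕ, x₀ ≤ x →
      c * x ≤ ((Finset.Icc 1 x).filter
        (fun n => ∃ p m₁ m₂ : ℕ, p.Prime ∧ n = p + 2 ^ (m₁ ^ 2) + 2 ^ (m₂ ^ 2))).card := by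
  obtain ⟨K, hK, hmoment⟩ := Romanoff.exists_second_moment_le
  refine ⟨1 / (512 ^ 2 * K), by positivity, 2 ^ 16, fun x hx => ?_⟩
  have hx0 : x ≠ 0 := by rintro rfl; norm_num at hx
  have hxpos : (0 : ℝ) < x := by exact_mod_cast Nat.pos_of_ne_zero hx0
  set l := Nat.log 2 x with hl
  set M := Nat.sqrt l with hM
  set P := Nat.primesLE (x / 2) with hP
  have hl16 : 16 ≤ l := (Nat.le_log_iff_pow_le (by norm_num) hx0).2 hx
  have hM4 : 4 ≤ M := Nat.le_sqrt.2 (by omega)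
  have hMl : M ^ 2 ≤ l := by rw [hM, sq]; exact Nat.sqrt_le l
  have h2M : 2 ^ (M ^ 2) ≤ x :=
    (Nat.pow_le_pow_right (by norm_num) hMl).trans (Nat.pow_log_le_self 2 hx0)
  set V := (P ×ˢ Romanoff.pairs M).image (fun z => z.1 + Romanoff.twoPowSum z.2) with hV
  have hsub : V ⊆ (Finset.Icc 1 x).filter
        (fun n => ∃ p m₁ m₂ : ℕ, p.Prime ∧ n = p + 2 ^ (m₁ ^ 2) + 2 ^ (m₂ ^ 2)) := by
    intro n hn
    simp only [hV, Finset.mem_image, Finset.mem_product] at hn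
    obtain ⟨z, ⟨hz1, hz2⟩, rfl⟩ := hn
    rw [hP, Nat.mem_primesLE] at hz1
    have hq := Romanoff.mem_pairs hz2
    have hv := Romanoff.two_mul_twoPowSum_le (by omega) hq.1 hq.2.1
    have hp1 := hz1.2.one_le
    rw [Finset.mem_filter, Finset.mem_Icc]
    refine ⟨⟨by omega, by omega⟩, z.1, z.2.1, z.2.2, hz1.2, ?_⟩
    simp only [Romanoff.twoPowSum]
    ring
  -- the first moment: `l + 1 ≤ (M + 1) ^ 2 ≤ 4 M ^ 2 ≤ 64 #(pairs M)`
  have hfirst : (x : ℝ) ≤ 512 * (P.card * (Romanoff.pairs M).card : ℕ) := by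
    have e1 : l + 1 ≤ 64 * (Romanoff.pairs M).card := by
      have e2 := Romanoff.sq_le_card_pairs (M := M) (by omega)
      have e3 : l < (M + 1) * (M + 1) := Nat.lt_succ_sqrt l
      nlinarith
    have e2 : ((l : ℝ) + 1) ≤ 64 * ((Romanoff.pairs M).card : ℝ) := by exact_mod_cast e1
    have e3 := Romanoff.le_primeCounting_half_mul_log x (le_trans (by norm_num) hx)
    rw [← Nat.primesLE_card_eq_primeCounting, ← hl, ← hP] at e3
    calc (x : ℝ) ≤ 8 * P.card * (l + 1) := e3
      _ ≤ 8 * P.card * (64 * ((Romanoff.pairs M).card : ℝ)) := by gcongr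
      _ = _ := by push_cast; ring
  have hCS := Romanoff.sq_card_le_card_image_mul P (Romanoff.pairs M) Romanoff.twoPowSum
  have hCS' : (((P.card * (Romanoff.pairs M).card : ℕ) : ℝ)) ^ 2 ≤ V.card * (K * x) := by
    refine le_trans ?_ (mul_le_mul_of_nonneg_left (hmoment x hx P hP M hM) (by positivity))
    exact_mod_cast hCS
  have hVle : (V.card : ℝ) ≤ ((Finset.Icc 1 x).filter
        (fun n => ∃ p m₁ m₂ : ℕ, p.Prime ∧ n = p + 2 ^ (m₁ ^ 2) + 2 ^ (m₂ ^ 2))).card := by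
    exact_mod_cast Finset.card_le_card hsub
  refine le_trans ?_ hVle
  have h1 : (x : ℝ) ^ 2 ≤ 512 ^ 2 * (V.card * (K * x)) := by
    calc (x : ℝ) ^ 2 ≤ (512 * (P.card * (Romanoff.pairs M).card : ℕ)) ^ 2 := by gcongr
      _ = 512 ^ 2 * ((P.card * (Romanoff.pairs M).card : ℕ) : ℝ) ^ 2 := by ring
      _ ≤ _ := by gcongr
  rw [div_mul_eq_mul_div, one_mul, div_le_iff₀ (by positivity)]
  apply le_of_mul_le_mul_right _ hxpos
  linarith
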